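/- Under the Viscous Setup, with additionally b > 2 and ρ̄ ≤ 1, let ω ∈ C_c^∞(ℝ) with ω(r) = 1 for r ∈ [0,1] and ω(r) = 0 for r ≥ 2. Then for any Δ ∈ (0,½) there exists a constant M > 0, depending only on n, γ, T, E₀ and ω but independent of Δ and ε, such that ε∫₀^T∫_a^b ρ_r² 𝟙_{{ρ<Δ}} ω(r)² r^{n−1} dr dt ≤ M(√ε(1 + Δ^{4−γ}) + Δ/a + Δ^{3/2}/√ε). -/

import Mathlib

open MeasureTheory Real Set

noncomputable section

/-- The internal energy function `h_δ(ρ) = κρ^γ/(γ-1) + δρ²`. -/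
def hDelta (γ κ δ ρ : ℝ) : ℝ := κ * ρ ^ γ / (γ - 1) + δ * ρ ^ (2 : ℕ)

/-- Its derivative `h_δ'(ρ̄) = κγρ̄^{γ-1}/(γ-1) + 2δρ̄`. -/
def hDelta' (γ κ δ ρbar : ℝ) : ℝ := κ * γ * ρbar ^ (γ - 1) / (γ - 1) + 2 * δ * ρbar

/-- Its second derivative `h_δ''(ρ) = κγρ^{γ-2} + 2δ`. -/
def hDelta'' (γ κ δ ρ : ℝ) : ℝ := κ * γ * ρ ^ (γ - 2) + 2 * δ

/-- The relative internal energy `h̄_δ(ρ,ρ̄) = h_δ(ρ) − h_δ(ρ̄) − h_δ'(ρ̄)(ρ−ρ̄)`. -/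
def hBarDelta (γ κ δ ρ ρbar : ℝ) : ℝ :=
  hDelta γ κ δ ρ - hDelta γ κ δ ρbar - hDelta' γ κ δ ρbar * (ρ - ρbar)

/-- The Viscous Setup: `n ≥ 2`, `γ > 1`, `κ = (γ−1)²/(4γ)`, `p_δ(ρ) = κρ^γ + δρ²`;
`T > 0`, `ε > 0`, `δ > 0`, `0 < a < 1 < b`, `ρ̄ > 0`; smooth functions `(ρ, m)` on
`[0,T]×[a,b]` with `ρ ≥ c_ε > 0` and `u = m/ρ`, satisfying the viscous system
`(r^{n−1}ρ)_t + (r^{n−1}m)_r = ε(r^{n−1}ρ_r)_r`,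
`(r^{n−1}m)_t + (r^{n−1}m²/ρ)_r + r^{n−1}(p_δ(ρ))_r
  = ε(r^{n−1}m)_{rr} − ε((n−1)/r)(r^{n−1}m)_r` on `(0,T)×(a,b)`,
the boundary conditions `ρ_r(t,a) = 0`, `m(t,a) = 0`, `ρ(t,b) = ρ̄`, `m(t,b) = 0`,
and the energy estimate with total energy bound `E₀`. -/
structure ViscousSetup (n : ℕ) (γ T E₀ : ℝ) where
  ε : ℝ
  δ : ℝ
  a : ℝ
  b : ℝ
  ρbar : ℝ
  cε : ℝ
  ρ : ℝ → ℝ → ℝ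
  m : ℝ → ℝ → ℝ
  hn : 2 ≤ n
  hγ : 1 < γ
  hT : 0 < T
  hε : 0 < ε
  hδ : 0 < δ
  ha0 : 0 < a
  ha1 : a < 1
  hb : 1 < b
  hρbar : 0 < ρbar
  hcε : 0 < cε
  smooth_ρ : ContDiff ℝ (⊤ : ℕ∞) (Function.uncurry ρ)
  smooth_m : ContDiff ℝ (⊤ : ℕ∞) (Function.uncurry m)
  pos : ∀ t ∈ Set.Icc 0 T, ∀ r ∈ Set.Icc a b, cε ≤ ρ t r
  continuity_eq : ∀ t ∈ Set.Ioo 0 T, ∀ r ∈ Set.Ioo a b,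
    r ^ (n - 1) * deriv (fun s => ρ s r) t + deriv (fun y => y ^ (n - 1) * m t y) r
      = ε * deriv (fun y => y ^ (n - 1) * deriv (fun z => ρ t z) y) r
  momentum_eq : ∀ t ∈ Set.Ioo 0 T, ∀ r ∈ Set.Ioo a b,
    r ^ (n - 1) * deriv (fun s => m s r) t
      + deriv (fun y => y ^ (n - 1) * (m t y) ^ (2:ℕ) / ρ t y) r
      + r ^ (n - 1) * deriv (fun y =>
          (γ - 1) ^ (2:ℕ) / (4 * γ) * (ρ t y) ^ γ + δ * (ρ t y) ^ (2:ℕ)) r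
      = ε * deriv (fun y => deriv (fun z => z ^ (n - 1) * m t z) y) r
        - ε * ((n - 1 : ℝ) / r) * deriv (fun y => y ^ (n - 1) * m t y) r
  bc_ρr : ∀ t ∈ Set.Icc 0 T, deriv (fun y => ρ t y) a = 0
  bc_ma : ∀ t ∈ Set.Icc 0 T, m t a = 0
  bc_ρb : ∀ t ∈ Set.Icc 0 T, ρ t b = ρbar
  bc_mb : ∀ t ∈ Set.Icc 0 T, m t b = 0
  energy : ∀ t ∈ Set.Icc 0 T,
    (∫ r in Set.Ioo a b,
      ((1/2) * ρ t r * (m t r / ρ t r) ^ (2:ℕ)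
        + hBarDelta γ ((γ - 1) ^ (2:ℕ) / (4 * γ)) δ (ρ t r) ρbar) * r ^ (n - 1))
    + ε * ∫ s in Set.Ioo 0 T, ∫ r in Set.Ioo a b,
        (hDelta'' γ ((γ - 1) ^ (2:ℕ) / (4 * γ)) δ (ρ s r) * (deriv (fun y => ρ s y) r) ^ (2:ℕ)
          + ρ s r * (deriv (fun y => m s y / ρ s y) r) ^ (2:ℕ)
          + (n - 1 : ℝ) * ρ s r * (m s r / ρ s r) ^ (2:ℕ) / r ^ (2:ℕ)) * r ^ (n - 1)
      ≤ E₀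

/-!
Both regimes of the viscosity rest on multiplying the continuity equation by a function of the
density.

For `ε ≤ 1` the multiplier is the derivative of a convex potential `φ` of linear growth with
`φ'' ≥ 1` on `[0, Δ]`, localized by `η = ω²`. The resulting balance law expresses
`ε ∫∫ φ''(ρ) ρ_r² η r^(n-1)` through `φ(ρ)`, the momentum and `∫ ρ φ''(ρ) dρ`; every term but one
is controlled by mass and kinetic energy, up to the factor `1/a` caused by the derivative of the
radial weight. The exception contains `u_r`, and Young's inequality against the viscous dissipation
turns it into `Δ^(3/2) / √ε`.

For `ε ≥ 1` these estimates degenerate. Here a bounded truncation of `ρ` solves a radial diffusion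
equation whose flux and source are controlled by the energy. Testing it against its enclosed mass
with decaying weights gives a bound uniform in `ε`, which `√ε` absorbs.
-/

/-- The closed space-time rectangle `[0,T] × [a,b]`. -/
def rect (T a b : ℝ) : Set (ℝ × ℝ) := Icc 0 T ×ˢ Icc a b

section rect

variable {T a b : ℝ} {f g : ℝ × ℝ → ℝ}

lemma isCompact_rect (T a b : ℝ) : IsCompact (rect T a b) := isCompact_Icc.prod isCompact_Icc

lemma measurableSet_rect (T a b : ℝ) : MeasurableSet (rect T a b) :=
  measurableSet_Icc.prod measurableSet_Icc

lemma mem_rect {t r : ℝ} (ht : t ∈ Icc 0 T) (hr : r ∈ Icc a b) : (t, r) ∈ rect T a b := ⟨ht, hr⟩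

lemma integrableOn_rect (hf : ContinuousOn f (rect T a b)) : IntegrableOn f (rect T a b) :=
  hf.integrableOn_compact (isCompact_rect T a b)

lemma continuousOn_slice_snd (hf : ContinuousOn f (rect T a b)) {t : ℝ} (ht : t ∈ Icc 0 T) :
    ContinuousOn (fun r => f (t, r)) (Icc a b) :=
  hf.comp (by fun_prop) fun _ hr => mem_rect ht hr

lemma continuousOn_slice_fst (hf : ContinuousOn f (rect T a b)) {r : ℝ} (hr : r ∈ Icc a b) :
    ContinuousOn (fun t => f (t, r)) (Icc 0 T) :=
  hf.comp (by fun_prop) fun _ ht => mem_rect ht hr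

lemma integral_rect (hf : ContinuousOn f (rect T a b)) (hT : 0 ≤ T) (hab : a ≤ b) :
    ∫ x in rect T a b, f x = ∫ t in (0)..T, ∫ r in a..b, f (t, r) := by
  unfold rect
  rw [Measure.volume_eq_prod, setIntegral_prod f (integrableOn_rect hf),
    integral_Icc_eq_integral_Ioc, intervalIntegral.integral_of_le hT]
  refine setIntegral_congr_fun measurableSet_Ioc fun t _ => ?_
  simp only [intervalIntegral.integral_of_le hab, integral_Icc_eq_integral_Ioc]

lemma integral_rect_swap (hf : ContinuousOn f (rect T a b)) (hT : 0 ≤ T) (hab : a ≤ b) :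
    ∫ x in rect T a b, f x = ∫ r in a..b, ∫ t in (0)..T, f (t, r) := by
  unfold rect
  have hswap : IntegrableOn (fun z : ℝ × ℝ => f z.swap) (Icc a b ×ˢ Icc 0 T)
      (volume.prod volume) := by
    rw [← Measure.volume_eq_prod]
    exact (hf.comp (by fun_prop) fun z hz => ⟨hz.2, hz.1⟩).integrableOn_compact
      (isCompact_Icc.prod isCompact_Icc)
  rw [Measure.volume_eq_prod, ← setIntegral_prod_swap, setIntegral_prod _ hswap,
    integral_Icc_eq_integral_Ioc, intervalIntegral.integral_of_le hab]
  refine setIntegral_congr_fun measurableSet_Ioc fun t _ => ?_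
  simp only [intervalIntegral.integral_of_le hT, integral_Icc_eq_integral_Ioc, Prod.swap_prod_mk]

lemma integral_rect_mono (hf : ContinuousOn f (rect T a b)) (hg : ContinuousOn g (rect T a b))
    (h : ∀ x ∈ rect T a b, f x ≤ g x) : ∫ x in rect T a b, f x ≤ ∫ x in rect T a b, g x :=
  setIntegral_mono_on (integrableOn_rect hf) (integrableOn_rect hg) (measurableSet_rect T a b) h

lemma integral_rect_nonneg (h : ∀ x ∈ rect T a b, 0 ≤ f x) : 0 ≤ ∫ x in rect T a b, f x :=
  setIntegral_nonneg (measurableSet_rect T a b) h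

lemma integral_rect_add (hf : ContinuousOn f (rect T a b)) (hg : ContinuousOn g (rect T a b)) :
    ∫ x in rect T a b, (f x + g x) = (∫ x in rect T a b, f x) + ∫ x in rect T a b, g x :=
  integral_add (integrableOn_rect hf) (integrableOn_rect hg)

lemma integral_rect_congr (h : ∀ x ∈ rect T a b, f x = g x) :
    ∫ x in rect T a b, f x = ∫ x in rect T a b, g x :=
  setIntegral_congr_fun (measurableSet_rect T a b) h

lemma integral_rect_mono_right (hf : ContinuousOn f (rect T a b))
    (h : ∀ x ∈ rect T a b, 0 ≤ f x) {b' : ℝ} (hb : b' ≤ b) :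
    ∫ x in rect T a b', f x ≤ ∫ x in rect T a b, f x := by
  refine setIntegral_mono_set (integrableOn_rect hf) ?_ ?_
  · exact (ae_restrict_iff' (measurableSet_rect T a b)).2 (Filter.Eventually.of_forall h)
  · exact (prod_mono_right (Icc_subset_Icc_right hb)).eventuallyLE

lemma intervalIntegrable_of_continuousOn_Icc {a b : ℝ} {f : ℝ → ℝ}
    (hf : ContinuousOn f (Icc a b)) (hab : a ≤ b) : IntervalIntegrable f volume a b :=
  ContinuousOn.intervalIntegrable (by rwa [uIcc_of_le hab])

lemma intervalIntegrable_integral_slice (hf : ContinuousOn f (rect T a b)) (hT : 0 ≤ T)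
    (hab : a ≤ b) : IntervalIntegrable (fun t => ∫ r in a..b, f (t, r)) volume 0 T := by
  rw [intervalIntegrable_iff_integrableOn_Icc_of_le hT]
  have hi := integrableOn_rect hf
  unfold rect at hi
  rw [IntegrableOn, Measure.volume_eq_prod, ← Measure.prod_restrict] at hi
  refine hi.integral_prod_left.congr (Filter.Eventually.of_forall fun t => ?_)
  simp only [intervalIntegral.integral_of_le hab, integral_Icc_eq_integral_Ioc]

lemma setIntegral_Ioo_eq {a b : ℝ} (hab : a ≤ b) (f : ℝ → ℝ) :
    ∫ r in Ioo a b, f r = ∫ r in a..b, f r := by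
  rw [intervalIntegral.integral_of_le hab, integral_Ioc_eq_integral_Ioo]

lemma integral_Ioo_le_integral_rect (hg : ContinuousOn g (rect T a b)) (hT : 0 ≤ T) (hab : a ≤ b)
    {b' : ℝ} (hb : b ≤ b') (hf : ∀ x, a ≤ x.2 → 0 ≤ f x) (hf_zero : ∀ x, b ≤ x.2 → f x = 0)
    (h : ∀ x ∈ rect T a b, f x ≤ g x) :
    ∫ t in Ioo 0 T, ∫ r in Ioo a b', f (t, r) ≤ ∫ x in rect T a b, g x := by
  have hslice : ∀ t ∈ Ioo 0 T, ∫ r in Ioo a b', f (t, r) ≤ ∫ r in a..b, g (t, r) := by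
    intro t ht
    have hgt := (intervalIntegrable_of_continuousOn_Icc
      (continuousOn_slice_snd hg (Ioo_subset_Icc_self ht)) hab).1
    calc ∫ r in Ioo a b', f (t, r) = ∫ r in Ioo a b, f (t, r) :=
          setIntegral_eq_of_subset_of_forall_sdiff_eq_zero measurableSet_Ioo
            (Ioo_subset_Ioo_right hb)
            fun r hr => hf_zero (t, r) (not_lt.1 fun hlt => hr.2 ⟨hr.1.1, hlt⟩)
      _ ≤ ∫ r in Ioo a b, g (t, r) := by
          refine integral_mono_of_nonneg ?_ (hgt.mono_set Ioo_subset_Ioc_self) ?_ <;>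
            refine (ae_restrict_iff' measurableSet_Ioo).2 (Filter.Eventually.of_forall
              fun r hr => ?_)
          · exact hf (t, r) hr.1.le
          · exact h (t, r) (mem_rect (Ioo_subset_Icc_self ht) (Ioo_subset_Icc_self hr))
      _ = _ := setIntegral_Ioo_eq hab _
  rw [integral_rect hg hT hab, ← setIntegral_Ioo_eq hT]
  refine integral_mono_of_nonneg ?_
    ((intervalIntegrable_integral_slice hg hT hab).1.mono_set Ioo_subset_Ioc_self)
    ((ae_restrict_iff' measurableSet_Ioo).2 (Filter.Eventually.of_forall hslice))
  exact Filter.Eventually.of_forall fun t =>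
    setIntegral_nonneg measurableSet_Ioo fun r hr => hf (t, r) hr.1.le

lemma integral_rect_le_of_slice_le (hf : ContinuousOn f (rect T a b)) (hT : 0 ≤ T)
    (hab : a ≤ b) {C : ℝ → ℝ} (hC : IntervalIntegrable C volume 0 T)
    (h : ∀ t ∈ Icc 0 T, ∫ r in a..b, f (t, r) ≤ C t) :
    ∫ x in rect T a b, f x ≤ ∫ t in (0)..T, C t := by
  rw [integral_rect hf hT hab]
  exact intervalIntegral.integral_mono_on hT (intervalIntegrable_integral_slice hf hT hab) hC h

lemma integral_rect_le_mul_of_slice_le (hf : ContinuousOn f (rect T a b)) (hT : 0 ≤ T)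
    (hab : a ≤ b) {C : ℝ} (h : ∀ t ∈ Icc 0 T, ∫ r in a..b, f (t, r) ≤ C) :
    ∫ x in rect T a b, f x ≤ T * C := by
  simpa using integral_rect_le_of_slice_le hf hT hab (C := fun _ => C) (by simp) h

lemma integral_rect_deriv_fst {A At : ℝ × ℝ → ℝ} (hAt : ContinuousOn At (rect T a b))
    (hT : 0 ≤ T) (hab : a ≤ b)
    (h : ∀ t ∈ Icc 0 T, ∀ r ∈ Icc a b, HasDerivAt (fun s => A (s, r)) (At (t, r)) t) :
    ∫ x in rect T a b, At x = ∫ r in a..b, (A (T, r) - A (0, r)) := by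
  rw [integral_rect_swap hAt hT hab]
  refine intervalIntegral.integral_congr fun r hr => ?_
  rw [uIcc_of_le hab] at hr
  refine intervalIntegral.integral_eq_sub_of_hasDerivAt (f := fun s => A (s, r)) (fun t ht => ?_)
    (intervalIntegrable_of_continuousOn_Icc (continuousOn_slice_fst hAt hr) hT)
  rw [uIcc_of_le hT] at ht
  exact h t ht r hr

lemma integral_rect_deriv_snd {B Br : ℝ × ℝ → ℝ} (hBr : ContinuousOn Br (rect T a b))
    (hT : 0 ≤ T) (hab : a ≤ b)
    (h : ∀ t ∈ Icc 0 T, ∀ r ∈ Icc a b, HasDerivAt (fun s => B (t, s)) (Br (t, r)) r) :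
    ∫ x in rect T a b, Br x = ∫ t in (0)..T, (B (t, b) - B (t, a)) := by
  rw [integral_rect hBr hT hab]
  refine intervalIntegral.integral_congr fun t ht => ?_
  rw [uIcc_of_le hT] at ht
  refine intervalIntegral.integral_eq_sub_of_hasDerivAt (f := fun s => B (t, s)) (fun r hr => ?_)
    (intervalIntegrable_of_continuousOn_Icc (continuousOn_slice_snd hBr ht) hab)
  rw [uIcc_of_le hab] at hr
  exact h t ht r hr

lemma integral_rect_divergence {A At B Br : ℝ × ℝ → ℝ} (hAt : ContinuousOn At (rect T a b))
    (hBr : ContinuousOn Br (rect T a b)) (hT : 0 ≤ T) (hab : a ≤ b)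
    (hA : ∀ t ∈ Icc 0 T, ∀ r ∈ Icc a b, HasDerivAt (fun s => A (s, r)) (At (t, r)) t)
    (hB : ∀ t ∈ Icc 0 T, ∀ r ∈ Icc a b, HasDerivAt (fun s => B (t, s)) (Br (t, r)) r) :
    ∫ x in rect T a b, (At x + Br x)
      = (∫ r in a..b, (A (T, r) - A (0, r))) + ∫ t in (0)..T, (B (t, b) - B (t, a)) := by
  rw [integral_rect_add hAt hBr, integral_rect_deriv_fst hAt hT hab hA,
    integral_rect_deriv_snd hBr hT hab hB]

end rect

lemma hasDerivAt_pow_succ (N : ℕ) (r : ℝ) :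
    HasDerivAt (fun r : ℝ => r ^ (N + 1)) ((N + 1) * r ^ N) r := by
  simpa using hasDerivAt_pow (N + 1) r

lemma hasDerivAt_integral_param {f f' : ℝ → ℝ → ℝ} (hf : Continuous (Function.uncurry f))
    (hf' : Continuous (Function.uncurry f')) (h : ∀ t s, HasDerivAt (fun t => f t s) (f' t s) t)
    (a b t : ℝ) : HasDerivAt (fun t => ∫ s in a..b, f t s) (∫ s in a..b, f' t s) t := by
  obtain ⟨C, hC⟩ := ((isCompact_closedBall t 1).prod (isCompact_uIcc (a := a) (b := b)))
    |>.exists_bound_of_continuousOn hf'.continuousOn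
  refine (intervalIntegral.hasDerivAt_integral_of_dominated_loc_of_deriv_le (bound := fun _ => C)
    (Metric.closedBall_mem_nhds t one_pos) (.of_forall fun x => ?_) ?_ ?_ ?_ (by simp) ?_).2
  · exact (hf.comp (by fun_prop : Continuous fun s => (x, s))).aestronglyMeasurable
  · exact (hf.comp (by fun_prop : Continuous fun s => (t, s))).intervalIntegrable _ _
  · exact (hf'.comp (by fun_prop : Continuous fun s => (t, s))).aestronglyMeasurable
  · exact .of_forall fun s hs x hx => hC (x, s) ⟨hx, uIoc_subset_uIcc hs⟩
  · exact .of_forall fun s _ x _ => h x s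

/-- The solid shell between the spheres of radii `a` and `r` in dimension `N + 2`, measured by
`r^(N+2) - a^(N+2)`. -/
def shell (N : ℕ) (a r : ℝ) : ℝ := r ^ (N + 2) - a ^ (N + 2)

/-- The base of the power defining `shellWeight`. -/
def shellBase (N : ℕ) (a r : ℝ) : ℝ := 2 * (N + 3) + shell N a r ^ 2

/-- A radial weight decaying like `r^(-(N+3))`, so that it makes the volume element `r^(N+1) dr`
finite. -/
def shellWeight (N : ℕ) (a r : ℝ) : ℝ := shellBase N a r ^ (-((N + 3) / (2 * (N + 2))) : ℝ)

/-- The weight of the squared enclosed mass that balances the derivative of `shellWeight`. -/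
def massWeight (N : ℕ) (a r : ℝ) : ℝ :=
  (N + 2) * (N + 3) * r ^ (N + 1) * shellWeight N a r / shellBase N a r

section weights

variable {N : ℕ} {a r : ℝ}

lemma shell_nonneg (ha : 0 ≤ a) (hr : a ≤ r) : 0 ≤ shell N a r :=
  sub_nonneg.2 (pow_le_pow_left₀ ha hr _)

lemma shell_le_pow (ha : 0 ≤ a) : shell N a r ≤ r ^ (N + 2) :=
  sub_le_self _ (pow_nonneg ha _)

lemma pow_le_shell_add_one (ha : 0 ≤ a) (ha1 : a ≤ 1) : r ^ (N + 2) ≤ shell N a r + 1 := by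
  have := pow_le_one₀ ha ha1 (n := N + 2)
  unfold shell
  linarith

lemma one_le_shellBase : 1 ≤ shellBase N a r := by
  have : (0 : ℝ) ≤ N := N.cast_nonneg
  unfold shellBase
  nlinarith [sq_nonneg (shell N a r)]

lemma shellBase_pos : 0 < shellBase N a r := one_pos.trans_le one_le_shellBase

lemma shellWeight_pos : 0 < shellWeight N a r := rpow_pos_of_pos shellBase_pos _

lemma shellWeight_le_one : shellWeight N a r ≤ 1 :=
  rpow_le_one_of_one_le_of_nonpos one_le_shellBase (by rw [neg_nonpos]; positivity)

lemma massWeight_nonneg (hr : 0 ≤ r) : 0 ≤ massWeight N a r :=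
  div_nonneg (mul_nonneg (by positivity) shellWeight_pos.le) shellBase_pos.le

lemma shell_le_shellBase : shell N a r ≤ shellBase N a r := by
  have : (0 : ℝ) ≤ N := N.cast_nonneg
  unfold shellBase
  nlinarith [sq_nonneg (shell N a r - 1)]

lemma pow_sq_mul_le_shellBase (ha : 0 ≤ a) (ha1 : a ≤ 1) (hr : a ≤ r) :
    (N + 3) * (r ^ (N + 2)) ^ 2 ≤ (N + 7 / 2) * shellBase N a r := by
  calc (N + 3) * (r ^ (N + 2)) ^ 2 ≤ (N + 3) * (shell N a r + 1) ^ 2 := by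
        gcongr
        · exact pow_nonneg (ha.trans hr) _
        · exact pow_le_shell_add_one ha ha1
    _ ≤ (N + 7 / 2) * shellBase N a r := by
        unfold shellBase
        nlinarith [sq_nonneg (shell N a r - 2 * (N + 3))]

lemma hasDerivAt_shell (N : ℕ) (a r : ℝ) : HasDerivAt (shell N a) ((N + 2) * r ^ (N + 1)) r := by
  refine ((hasDerivAt_pow_succ (N + 1) r).sub_const (a ^ (N + 2))).congr_deriv ?_
  push_cast
  ring

@[fun_prop] lemma continuous_shell : Continuous (shell N a) := by unfold shell; fun_prop

@[fun_prop] lemma continuous_shellBase : Continuous (shellBase N a) := by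
  unfold shellBase; fun_prop

@[fun_prop] lemma continuous_shellWeight : Continuous (shellWeight N a) :=
  continuous_shellBase.rpow_const fun _ => Or.inl shellBase_pos.ne'

@[fun_prop] lemma continuous_massWeight : Continuous (massWeight N a) :=
  Continuous.div (by fun_prop) (by fun_prop) fun _ => shellBase_pos.ne'

lemma hasDerivAt_shellWeight (N : ℕ) (a r : ℝ) :
    HasDerivAt (shellWeight N a) (-(shell N a r / (N + 2) * massWeight N a r)) r := by
  have hbase : HasDerivAt (shellBase N a) (2 * shell N a r * ((N + 2) * r ^ (N + 1))) r := by
    refine (((hasDerivAt_shell N a r).pow 2).const_add (2 * ((N : ℝ) + 3))).congr_deriv ?_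
    simp only [Nat.cast_ofNat, Nat.add_one_sub_one, pow_one]
  refine (hbase.rpow_const (Or.inl shellBase_pos.ne')).congr_deriv ?_
  rw [rpow_sub_one shellBase_pos.ne', massWeight, ← shellWeight]
  have := (shellBase_pos (N := N) (a := a) (r := r)).ne'
  field_simp

lemma shell_div_mul_massWeight_le (hr : 0 ≤ r) :
    shell N a r / (N + 2) * massWeight N a r ≤ (N + 3) * (r ^ (N + 1) * shellWeight N a r) := by
  have := shellWeight_pos (N := N) (a := a) (r := r)
  calc shell N a r / (N + 2) * massWeight N a r
      = (N + 3) * (r ^ (N + 1) * shellWeight N a r) * (shell N a r / shellBase N a r) := by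
        unfold massWeight
        field_simp
    _ ≤ (N + 3) * (r ^ (N + 1) * shellWeight N a r) * 1 := by
        gcongr
        exact div_le_one_of_le₀ shell_le_shellBase shellBase_pos.le
    _ = _ := mul_one _

lemma massWeight_mul_shell_sq_le (hr : 0 ≤ r) :
    massWeight N a r * (shell N a r / (N + 2)) ^ 2 ≤ 2 * (r ^ (N + 1) * shellWeight N a r) := by
  have := shellWeight_pos (N := N) (a := a) (r := r)
  have hN : (0 : ℝ) ≤ N := N.cast_nonneg
  have hratio : (N + 3) / (N + 2) * (shell N a r ^ 2 / shellBase N a r) ≤ 2 * 1 := by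
    refine mul_le_mul ?_ (div_le_one_of_le₀ ?_ shellBase_pos.le)
      (div_nonneg (sq_nonneg _) shellBase_pos.le) zero_le_two
    · rw [div_le_iff₀ (by positivity)]
      linarith [hN]
    · unfold shellBase
      linarith
  calc massWeight N a r * (shell N a r / (N + 2)) ^ 2
      = (N + 3) / (N + 2) * (shell N a r ^ 2 / shellBase N a r)
          * (r ^ (N + 1) * shellWeight N a r) := by
        unfold massWeight
        field_simp
    _ ≤ 2 * 1 * (r ^ (N + 1) * shellWeight N a r) := by gcongr
    _ = _ := by ring

lemma sq_mul_pow_mul_shellWeight_le (ha : 0 ≤ a) (ha1 : a ≤ 1) (hr : a ≤ r) (hr0 : 0 < r) :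
    r ^ 2 * (r ^ (N + 1) * shellWeight N a r) ≤ 2 := by
  have hsq : (r ^ (N + 2)) ^ 2 ≤ 2 * shellBase N a r := by
    have h1 := pow_sq_mul_le_shellBase (N := N) ha ha1 hr
    have h2 := shellBase_pos (N := N) (a := a) (r := r)
    nlinarith
  have hpow : r ^ (N + 3) = ((r ^ (N + 2)) ^ 2) ^ ((N + 3) / (2 * (N + 2)) : ℝ) := by
    rw [← pow_mul, ← rpow_natCast, ← rpow_natCast, ← rpow_mul hr0.le]
    congr 1
    push_cast
    field_simp
  have h2 : (2 : ℝ) ^ ((N + 3) / (2 * (N + 2)) : ℝ) ≤ 2 := by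
    refine rpow_le_self_of_one_le one_le_two ?_
    rw [div_le_one (by positivity)]
    linarith
  calc r ^ 2 * (r ^ (N + 1) * shellWeight N a r) = r ^ (N + 3) * shellWeight N a r := by ring
    _ ≤ (2 * shellBase N a r) ^ ((N + 3) / (2 * (N + 2)) : ℝ) * shellWeight N a r := by
        rw [hpow]
        have := shellWeight_pos (N := N) (a := a) (r := r)
        gcongr
    _ = 2 ^ ((N + 3) / (2 * (N + 2)) : ℝ) := by
        rw [mul_rpow zero_le_two shellBase_pos.le, shellWeight, mul_assoc, ← rpow_add shellBase_pos,
          add_neg_cancel, rpow_zero, mul_one]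
    _ ≤ 2 := h2

lemma pow_mul_shellWeight_le (ha : 0 < a) (ha1 : a ≤ 1) (hr : a ≤ r) :
    r ^ (N + 1) * shellWeight N a r ≤ 4 * (1 + r ^ 2)⁻¹ := by
  have hr0 : 0 < r := ha.trans_le hr
  have hφ := shellWeight_pos (N := N) (a := a) (r := r)
  rw [← div_eq_mul_inv, le_div_iff₀ (by positivity)]
  have htail := sq_mul_pow_mul_shellWeight_le (N := N) ha.le ha1 hr hr0
  suffices r ^ (N + 1) * shellWeight N a r ≤ 2 by linarith
  rcases le_total r 1 with h | h
  · calc r ^ (N + 1) * shellWeight N a r ≤ 1 * 1 :=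
          mul_le_mul (pow_le_one₀ hr0.le h) shellWeight_le_one hφ.le one_pos.le
      _ ≤ 2 := by norm_num
  · exact (le_mul_of_one_le_left (by positivity) (one_le_pow₀ h)).trans htail

lemma integral_pow_mul_shellWeight_le (ha : 0 < a) (ha1 : a ≤ 1) {b : ℝ} (hab : a ≤ b) :
    ∫ r in a..b, r ^ (N + 1) * shellWeight N a r ≤ 4 * π := by
  have hc : Continuous fun r : ℝ => 4 * (1 + r ^ 2)⁻¹ :=
    continuous_const.mul (Continuous.inv₀ (by fun_prop) fun r => by positivity)
  calc ∫ r in a..b, r ^ (N + 1) * shellWeight N a r ≤ ∫ r in a..b, 4 * (1 + r ^ 2)⁻¹ :=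
        intervalIntegral.integral_mono_on hab (Continuous.intervalIntegrable (by fun_prop) _ _)
          (hc.intervalIntegrable _ _) fun r hr => pow_mul_shellWeight_le ha ha1 hr.1
    _ = 4 * (arctan b - arctan a) := by
        rw [intervalIntegral.integral_const_mul, integral_inv_one_add_sq]
    _ ≤ 4 * π := by linarith [arctan_lt_pi_div_two b, neg_pi_div_two_lt_arctan a]

lemma le_shellWeight_of_le_two (ha : 0 ≤ a) (hr : a ≤ r) (hr2 : r ≤ 2) :
    (2 * (N + 3) + (2 ^ (N + 2)) ^ 2 : ℝ)⁻¹ ≤ shellWeight N a r := by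
  have hexp : (-1 : ℝ) ≤ -((N + 3) / (2 * (N + 2))) := by
    rw [neg_le_neg_iff, div_le_one (by positivity)]
    linarith
  have hshell : shell N a r ≤ 2 ^ (N + 2) :=
    (shell_le_pow ha).trans (pow_le_pow_left₀ (ha.trans hr) hr2 _)
  calc (2 * (N + 3) + (2 ^ (N + 2)) ^ 2 : ℝ)⁻¹ ≤ (shellBase N a r)⁻¹ := by
        have := shellBase_pos (N := N) (a := a) (r := r)
        have := shell_nonneg (N := N) ha hr
        gcongr
        unfold shellBase
        gcongr
    _ = shellBase N a r ^ (-1 : ℝ) := (rpow_neg_one _).symm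
    _ ≤ shellWeight N a r := rpow_le_rpow_of_exponent_le one_le_shellBase hexp

end weights

/-- A solution `W` of the radial diffusion equation
`r^(N+1) W_t = (r^(N+1) G)_r + r^(N+1) σ` in dimension `N + 2` on `[0,T] × [a,b]` with no flux
through `r = a` and `W = 0` at `r = b`. The fields `Wt`, `Wr`, `Gr` are the partial derivatives;
`ν W_r - G` is regarded as a perturbation of the diffusive flux `ν W_r`. -/
structure RadialDiffusion (N : ℕ) (ν T a b : ℝ) where
  W : ℝ × ℝ → ℝ
  Wt : ℝ × ℝ → ℝ
  Wr : ℝ × ℝ → ℝ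
  G : ℝ × ℝ → ℝ
  Gr : ℝ × ℝ → ℝ
  σ : ℝ × ℝ → ℝ
  hT : 0 ≤ T
  ha : 0 < a
  hab : a ≤ b
  continuous_W : Continuous W
  continuous_Wt : Continuous Wt
  continuous_Wr : Continuous Wr
  continuous_G : Continuous G
  continuous_Gr : Continuous Gr
  continuous_σ : Continuous σ
  hasDerivAt_W_fst : ∀ t r, HasDerivAt (fun s => W (s, r)) (Wt (t, r)) t
  hasDerivAt_W_snd : ∀ t r, HasDerivAt (fun y => W (t, y)) (Wr (t, r)) r
  hasDerivAt_G_snd : ∀ t r, HasDerivAt (fun y => G (t, y)) (Gr (t, r)) r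
  equation : ∀ x ∈ rect T a b, x.2 ^ (N + 1) * Wt x
    = x.2 ^ (N + 1) * Gr x + (N + 1) * x.2 ^ N * G x + x.2 ^ (N + 1) * σ x
  G_left : ∀ t ∈ Icc 0 T, G (t, a) = 0
  W_right : ∀ t ∈ Icc 0 T, W (t, b) = 0

namespace RadialDiffusion

attribute [fun_prop] continuous_W continuous_Wt continuous_Wr continuous_G continuous_Gr
  continuous_σ

variable {N : ℕ} {ν T a b : ℝ} (D : RadialDiffusion N ν T a b)

/-- The integral of `W` over the shell between `a` and `r`. -/
def mass (x : ℝ × ℝ) : ℝ := ∫ s in a..x.2, s ^ (N + 1) * D.W (x.1, s)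

/-- The integral of the source over the shell between `a` and `r`. -/
def source (x : ℝ × ℝ) : ℝ := ∫ s in a..x.2, s ^ (N + 1) * D.σ (x.1, s)

/-- The integral of `|σ|` over the whole shell at time `t`. -/
def totalSource (t : ℝ) : ℝ := ∫ s in a..b, s ^ (N + 1) * |D.σ (t, s)|

/-- The mass missing from the shell between `a` and `r` compared with the constant `W(t, r)`. -/
def deficit (x : ℝ × ℝ) : ℝ := shell N a x.2 / (N + 2) * D.W x - D.mass x

@[fun_prop] lemma continuous_mass : Continuous D.mass := by
  unfold mass
  exact intervalIntegral.continuous_parametric_intervalIntegral_of_continuous (by fun_prop)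
    (by fun_prop)

@[fun_prop] lemma continuous_source : Continuous D.source := by
  unfold source
  exact intervalIntegral.continuous_parametric_intervalIntegral_of_continuous (by fun_prop)
    (by fun_prop)

@[fun_prop] lemma continuous_totalSource : Continuous D.totalSource := by
  unfold totalSource
  exact intervalIntegral.continuous_parametric_intervalIntegral_of_continuous' (by fun_prop) a b

@[fun_prop] lemma continuous_deficit : Continuous D.deficit := by unfold deficit; fun_prop

lemma hasDerivAt_mass_fst {t r : ℝ} (hx : (t, r) ∈ rect T a b) :
    HasDerivAt (fun s => D.mass (s, r)) (r ^ (N + 1) * D.G (t, r) + D.source (t, r)) t := by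
  refine (hasDerivAt_integral_param (f := fun t s => s ^ (N + 1) * D.W (t, s))
    (f' := fun t s => s ^ (N + 1) * D.Wt (t, s)) (by fun_prop) (by fun_prop)
    (fun t s => (D.hasDerivAt_W_fst t s).const_mul _) a r t).congr_deriv ?_
  have hflux : ∫ s in a..r, ((N + 1) * s ^ N * D.G (t, s) + s ^ (N + 1) * D.Gr (t, s))
      = r ^ (N + 1) * D.G (t, r) := by
    rw [intervalIntegral.integral_eq_sub_of_hasDerivAt
      (fun s _ => (hasDerivAt_pow_succ N s).mul (D.hasDerivAt_G_snd t s))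
      (Continuous.intervalIntegrable (by fun_prop) _ _)]
    simp only [Pi.mul_apply, D.G_left t hx.1, mul_zero, sub_zero]
  rw [← hflux, source, ← intervalIntegral.integral_add
    (Continuous.intervalIntegrable (by fun_prop) _ _)
    (Continuous.intervalIntegrable (by fun_prop) _ _)]
  refine intervalIntegral.integral_congr fun s hs => ?_
  rw [uIcc_of_le hx.2.1] at hs
  have := D.equation (t, s) (mem_rect hx.1 ⟨hs.1, hs.2.trans hx.2.2⟩)
  simp only at this ⊢
  linarith

lemma hasDerivAt_mass_snd (t r : ℝ) :
    HasDerivAt (fun y => D.mass (t, y)) (r ^ (N + 1) * D.W (t, r)) r :=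
  (Continuous.integral_hasStrictDerivAt (f := fun s => s ^ (N + 1) * D.W (t, s))
    (by fun_prop) a r).hasDerivAt

lemma hasDerivAt_deficit (t r : ℝ) :
    HasDerivAt (fun y => D.deficit (t, y)) (shell N a r / (N + 2) * D.Wr (t, r)) r := by
  refine ((((hasDerivAt_shell N a r).div_const (N + 2)).mul (D.hasDerivAt_W_snd t r)).sub
    (D.hasDerivAt_mass_snd t r)).congr_deriv ?_
  have : (N : ℝ) + 2 ≠ 0 := by positivity
  field_simp
  ring

lemma deficit_left (t : ℝ) : D.deficit (t, a) = 0 := by simp [deficit, shell, mass]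

lemma abs_mass_le {B : ℝ} (hW : ∀ x ∈ rect T a b, |D.W x| ≤ B) {x : ℝ × ℝ}
    (hx : x ∈ rect T a b) : |D.mass x| ≤ B * (shell N a x.2 / (N + 2)) := by
  have hnonneg : ∀ s ∈ Icc a x.2, 0 ≤ s ^ (N + 1) := fun s hs => pow_nonneg (D.ha.le.trans hs.1) _
  calc |D.mass x| ≤ ∫ s in a..x.2, |s ^ (N + 1) * D.W (x.1, s)| :=
        intervalIntegral.abs_integral_le_integral_abs hx.2.1
    _ ≤ ∫ s in a..x.2, s ^ (N + 1) * B := by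
        refine intervalIntegral.integral_mono_on hx.2.1
          (Continuous.intervalIntegrable (by fun_prop) _ _)
          (Continuous.intervalIntegrable (by fun_prop) _ _) fun s hs => ?_
        rw [abs_mul, abs_of_nonneg (hnonneg s hs)]
        exact mul_le_mul_of_nonneg_left (hW (x.1, s) ⟨hx.1, hs.1, hs.2.trans hx.2.2⟩)
          (hnonneg s hs)
    _ = B * (shell N a x.2 / (N + 2)) := by
        rw [intervalIntegral.integral_mul_const, integral_pow, shell, mul_comm]
        push_cast
        ring_nf

lemma abs_source_le {x : ℝ × ℝ} (hx : x ∈ rect T a b) :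
    |D.source x| ≤ D.totalSource x.1 := by
  have hnonneg : ∀ s ∈ Icc a b, 0 ≤ s ^ (N + 1) := fun s hs => pow_nonneg (D.ha.le.trans hs.1) _
  calc |D.source x| ≤ ∫ s in a..x.2, |s ^ (N + 1) * D.σ (x.1, s)| :=
        intervalIntegral.abs_integral_le_integral_abs hx.2.1
    _ ≤ ∫ s in a..b, |s ^ (N + 1) * D.σ (x.1, s)| :=
        intervalIntegral.integral_mono_interval le_rfl hx.2.1 hx.2.2
          (.of_forall fun s => abs_nonneg _) (Continuous.intervalIntegrable (by fun_prop) _ _)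
    _ = D.totalSource x.1 := by
        refine intervalIntegral.integral_congr fun s hs => ?_
        rw [uIcc_of_le D.hab] at hs
        simp only [abs_mul, abs_of_nonneg (hnonneg s hs)]

/-- The weighted square of `W`, corrected by the weighted square of the enclosed mass so that its
time derivative contains no term of order zero in `W`. -/
def energy (x : ℝ × ℝ) : ℝ :=
  1 / 2 * (massWeight N a x.2 * D.mass x ^ 2
    - x.2 ^ (N + 1) * shellWeight N a x.2 * D.W x ^ 2)

/-- The time derivative of `energy`. -/
def energyT (x : ℝ × ℝ) : ℝ :=
  massWeight N a x.2 * D.mass x * (x.2 ^ (N + 1) * D.G x + D.source x)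
    - shellWeight N a x.2 * D.W x * (x.2 ^ (N + 1) * D.Wt x)

/-- The flux of `energy`. Its last term is a Hardy-type correction, which makes the production of
`energy` a coercive form in `W_r` and the deficit. -/
def energyFlux (x : ℝ × ℝ) : ℝ :=
  shellWeight N a x.2 * D.W x * (x.2 ^ (N + 1) * D.G x)
    - ν * (N + 4) / 2 * (N + 2) ^ 2
      * (shellWeight N a x.2 * D.deficit x ^ 2 * (x.2 ^ (N + 3 + 1))⁻¹)

/-- The radial derivative of `energyFlux`. -/
def energyFluxR (x : ℝ × ℝ) : ℝ :=
  -(shell N a x.2 / (N + 2) * massWeight N a x.2) * D.W x * (x.2 ^ (N + 1) * D.G x)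
    + shellWeight N a x.2 * D.Wr x * (x.2 ^ (N + 1) * D.G x)
    + shellWeight N a x.2 * D.W x * ((N + 1) * x.2 ^ N * D.G x + x.2 ^ (N + 1) * D.Gr x)
    - ν * (N + 4) / 2 * (N + 2) ^ 2
      * (-(shell N a x.2 / (N + 2) * massWeight N a x.2) * D.deficit x ^ 2 / x.2 ^ (N + 4)
        + 2 * shellWeight N a x.2 * D.deficit x * (shell N a x.2 / (N + 2) * D.Wr x) / x.2 ^ (N + 4)
        - (N + 4) * shellWeight N a x.2 * D.deficit x ^ 2 / x.2 ^ (N + 5))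

lemma hasDerivAt_energy {t r : ℝ} (hx : (t, r) ∈ rect T a b) :
    HasDerivAt (fun s => D.energy (s, r)) (D.energyT (t, r)) t := by
  refine ((((D.hasDerivAt_mass_fst hx).pow 2).const_mul (massWeight N a r)).sub
    (((D.hasDerivAt_W_fst t r).pow 2).const_mul (r ^ (N + 1) * shellWeight N a r))
    |>.const_mul (1 / 2)).congr_deriv ?_
  simp only [energyT, Nat.cast_ofNat, Nat.add_one_sub_one, pow_one]
  ring

lemma hasDerivAt_energyFlux {t r : ℝ} (hr : r ≠ 0) :
    HasDerivAt (fun y => D.energyFlux (t, y)) (D.energyFluxR (t, r)) r := by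
  have hφ := hasDerivAt_shellWeight N a r
  refine (((hφ.mul (D.hasDerivAt_W_snd t r)).mul
    ((hasDerivAt_pow_succ N r).mul (D.hasDerivAt_G_snd t r))).sub
    (((hφ.mul ((D.hasDerivAt_deficit t r).pow 2)).mul
      ((hasDerivAt_pow_succ (N + 3) r).inv (pow_ne_zero _ hr))).const_mul
        (ν * (N + 4) / 2 * (N + 2) ^ 2))).congr_deriv ?_
  simp only [energyFluxR, Nat.cast_add, Nat.cast_ofNat, Nat.add_one_sub_one, pow_one, Pi.mul_apply,
    Pi.pow_apply, Pi.inv_apply]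
  have : (N : ℝ) + 2 ≠ 0 := by positivity
  field_simp
  ring

@[fun_prop] lemma continuous_energyT : Continuous D.energyT := by unfold energyT; fun_prop

@[fun_prop] lemma continuousOn_energyFluxR : ContinuousOn D.energyFluxR (rect T a b) := by
  have hdiv : ∀ (f : ℝ × ℝ → ℝ) (k : ℕ), Continuous f →
      ContinuousOn (fun x => f x / x.2 ^ k) (rect T a b) := fun f k hf =>
    hf.continuousOn.div (by fun_prop) fun x hx => pow_ne_zero k (D.ha.trans_le hx.2.1).ne'
  unfold energyFluxR
  exact ContinuousOn.sub (Continuous.continuousOn (by fun_prop)) (continuousOn_const.mul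
    (((hdiv _ _ (by fun_prop)).add (hdiv _ _ (by fun_prop))).sub (hdiv _ _ (by fun_prop))))

end RadialDiffusion

/-- The quadratic form in the gradient `X` and the mean slope `d` governing the production of
`RadialDiffusion.energy`. -/
def productionForm (m z θ X d : ℝ) : ℝ :=
  X ^ 2 - (z + m * θ) * X * d + m / 2 * (m + θ * z) * d ^ 2

section productionForm

variable {m z θ : ℝ}

lemma le_four_mul_sub_sq (hz0 : 0 ≤ z) (hz : z ≤ m - 1 / 2) (hθ0 : 0 ≤ θ) (hθ : θ ≤ 1) :
    m - 1 / 4 ≤ 4 * (m / 2 * (m + θ * z)) - (z + m * θ) ^ 2 := by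
  have hzsq : z ^ 2 ≤ (m - 1 / 2) ^ 2 := pow_le_pow_left₀ hz0 hz 2
  have hθsq : m ^ 2 * θ ^ 2 ≤ m ^ 2 * 1 :=
    mul_le_mul_of_nonneg_left (pow_le_one₀ hθ0 hθ) (sq_nonneg m)
  linear_combination hzsq + hθsq

lemma sq_snd_le_productionForm (hm : 2 ≤ m) (hz0 : 0 ≤ z) (hz : z ≤ m - 1 / 2) (hθ0 : 0 ≤ θ)
    (hθ : θ ≤ 1) (X d : ℝ) : d ^ 2 ≤ 4 * productionForm m z θ X d := by
  have hdisc := le_four_mul_sub_sq hz0 hz hθ0 hθ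
  have hsquare : 4 * productionForm m z θ X d = (2 * X - (z + m * θ) * d) ^ 2
      + (4 * (m / 2 * (m + θ * z)) - (z + m * θ) ^ 2) * d ^ 2 := by unfold productionForm; ring
  rw [hsquare]
  nlinarith [sq_nonneg (2 * X - (z + m * θ) * d), sq_nonneg d]

lemma sq_fst_le_productionForm (hm : 2 ≤ m) (hz0 : 0 ≤ z) (hz : z ≤ m - 1 / 2) (hθ0 : 0 ≤ θ)
    (hθ : θ ≤ 1) (X d : ℝ) : X ^ 2 ≤ 4 * m * productionForm m z θ X d := by
  have hdisc := le_four_mul_sub_sq hz0 hz hθ0 hθ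
  have hQ : 0 ≤ productionForm m z θ X d := by
    linarith [sq_snd_le_productionForm hm hz0 hz hθ0 hθ X d, sq_nonneg d]
  have hc : m / 2 * (m + θ * z) ≤ m * (m - 1 / 4) := by
    nlinarith [(mul_le_of_le_one_left hz0 hθ).trans hz]
  have hsquare : 4 * (m / 2 * (m + θ * z)) * productionForm m z θ X d
      = (2 * (m / 2 * (m + θ * z)) * d - (z + m * θ) * X) ^ 2
      + (4 * (m / 2 * (m + θ * z)) - (z + m * θ) ^ 2) * X ^ 2 := by unfold productionForm; ring
  refine le_of_mul_le_mul_left ?_ (by linarith : 0 < m - 1 / 4)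
  calc (m - 1 / 4) * X ^ 2 ≤ 4 * (m / 2 * (m + θ * z)) * productionForm m z θ X d := by
        rw [hsquare]
        nlinarith [sq_nonneg (2 * (m / 2 * (m + θ * z)) * d - (z + m * θ) * X), sq_nonneg X]
    _ ≤ (m - 1 / 4) * (4 * m * productionForm m z θ X d) := by nlinarith

lemma mul_le_div_add_div {ν k : ℝ} (hν : 0 < ν) (hk : 0 < k) (F X : ℝ) :
    F * X ≤ ν * X ^ 2 / (4 * k) + k * F ^ 2 / ν := by
  have hsquare : ν * X ^ 2 / (4 * k) + k * F ^ 2 / ν - F * X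
      = (ν * X - 2 * k * F) ^ 2 / (4 * k * ν) := by field_simp; ring
  rw [← sub_nonneg, hsquare]
  positivity

lemma le_mul_productionForm_sub {ν : ℝ} (hν : 0 < ν) (hm : 2 ≤ m) (hz0 : 0 ≤ z)
    (hz : z ≤ m - 1 / 2) (hθ0 : 0 ≤ θ) (hθ : θ ≤ 1) (X d F : ℝ) :
    ν * X ^ 2 / (8 * m) - 4 * m * (m + 1) * F ^ 2 / ν
      ≤ ν * productionForm m z θ X d - F * (X - z * d) := by
  have hX := sq_fst_le_productionForm hm hz0 hz hθ0 hθ X d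
  have hd := sq_snd_le_productionForm hm hz0 hz hθ0 hθ X d
  have hQ : ν * X ^ 2 / (8 * m) ≤ ν * productionForm m z θ X d / 2 := by
    rw [div_le_div_iff₀ (by linarith) two_pos]
    nlinarith
  have hFX : F * X ≤ ν * X ^ 2 / (4 * (4 * m)) + 4 * m * F ^ 2 / ν :=
    mul_le_div_add_div hν (by linarith) F X
  have hFd : -F * (z * d) ≤ ν * (z * d) ^ 2 / (4 * (4 * m ^ 2)) + 4 * m ^ 2 * (-F) ^ 2 / ν :=
    mul_le_div_add_div hν (by nlinarith) (-F) (z * d)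
  have hzd : ν * (z * d) ^ 2 / (4 * (4 * m ^ 2)) ≤ ν * productionForm m z θ X d / 4 := by
    have hzm : (z * d) ^ 2 ≤ m ^ 2 * d ^ 2 := by
      rw [mul_pow]
      exact mul_le_mul_of_nonneg_right (pow_le_pow_left₀ hz0 (by linarith) 2) (sq_nonneg d)
    have hm2 : 0 < m ^ 2 := by nlinarith
    rw [div_le_div_iff₀ (by linarith) four_pos]
    nlinarith [mul_le_mul_of_nonneg_left hd (mul_pos hν hm2).le,
      mul_le_mul_of_nonneg_left hzm hν.le]
  rw [neg_sq] at hFd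
  have hhalf : ν * X ^ 2 / (4 * (4 * m)) = ν * X ^ 2 / (8 * m) / 2 := by ring
  have hsum : 4 * m * (m + 1) * F ^ 2 / ν = 4 * m * F ^ 2 / ν + 4 * m ^ 2 * F ^ 2 / ν := by ring
  linarith

end productionForm

namespace RadialDiffusion

variable {N : ℕ} {ν T a b : ℝ} (D : RadialDiffusion N ν T a b)

lemma energyT_add_energyFluxR {x : ℝ × ℝ} (hx : x ∈ rect T a b) :
    D.energyT x + D.energyFluxR x
      = x.2 ^ (N + 1) * shellWeight N a x.2
          * (ν * productionForm (N + 4) ((N + 3) * (x.2 ^ (N + 2)) ^ 2 / shellBase N a x.2)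
              (shell N a x.2 / x.2 ^ (N + 2)) (D.Wr x) ((N + 2) * D.deficit x / x.2 ^ (N + 3))
            - (ν * D.Wr x - D.G x) * (D.Wr x - (N + 3) * (x.2 ^ (N + 2)) ^ 2 / shellBase N a x.2
              * ((N + 2) * D.deficit x / x.2 ^ (N + 3))))
        + massWeight N a x.2 * D.mass x * D.source x
        - shellWeight N a x.2 * (x.2 ^ (N + 1) * D.σ x) * D.W x := by
  have hr : x.2 ≠ 0 := (D.ha.trans_le hx.2.1).ne'
  have hbase : shellBase N a x.2 ≠ 0 := shellBase_pos.ne'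
  have hN : (N : ℝ) + 2 ≠ 0 := by positivity
  have hmass : D.mass x = shell N a x.2 / (N + 2) * D.W x - D.deficit x := by
    rw [deficit, sub_sub_cancel]
  rw [energyT, energyFluxR, D.equation x hx, hmass]
  unfold productionForm massWeight
  field_simp
  ring

lemma abs_massWeight_mul_mass_mul_source_le {B : ℝ} (hW : ∀ x ∈ rect T a b, |D.W x| ≤ B)
    {x : ℝ × ℝ} (hx : x ∈ rect T a b) :
    |massWeight N a x.2 * D.mass x * D.source x|
      ≤ B * ((N + 3) * (x.2 ^ (N + 1) * shellWeight N a x.2 * D.totalSource x.1)) := by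
  have hr : 0 ≤ x.2 := D.ha.le.trans hx.2.1
  have hχ := massWeight_nonneg (N := N) (a := a) hr
  have hB : 0 ≤ B := (abs_nonneg _).trans (hW x hx)
  have hS : 0 ≤ D.totalSource x.1 := (abs_nonneg _).trans (D.abs_source_le hx)
  calc |massWeight N a x.2 * D.mass x * D.source x|
      = massWeight N a x.2 * |D.mass x| * |D.source x| := by
        rw [abs_mul, abs_mul, abs_of_nonneg hχ]
    _ ≤ massWeight N a x.2 * (B * (shell N a x.2 / (N + 2))) * D.totalSource x.1 := by
        have := shell_nonneg (N := N) D.ha.le hx.2.1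
        gcongr
        · exact D.abs_mass_le hW hx
        · exact D.abs_source_le hx
    _ = B * (shell N a x.2 / (N + 2) * massWeight N a x.2 * D.totalSource x.1) := by ring
    _ ≤ B * ((N + 3) * (x.2 ^ (N + 1) * shellWeight N a x.2) * D.totalSource x.1) := by
        gcongr B * (?_ * _)
        exact shell_div_mul_massWeight_le hr
    _ = _ := by ring

lemma abs_shellWeight_mul_σ_mul_W_le {B : ℝ} (hW : ∀ x ∈ rect T a b, |D.W x| ≤ B)
    {x : ℝ × ℝ} (hx : x ∈ rect T a b) :
    |shellWeight N a x.2 * (x.2 ^ (N + 1) * D.σ x) * D.W x| ≤ B * (x.2 ^ (N + 1) * |D.σ x|) := by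
  have hr : 0 ≤ x.2 := D.ha.le.trans hx.2.1
  have : 0 ≤ B := (abs_nonneg _).trans (hW x hx)
  rw [abs_mul, abs_mul, abs_mul, abs_of_pos shellWeight_pos, abs_of_nonneg (by positivity)]
  calc shellWeight N a x.2 * (x.2 ^ (N + 1) * |D.σ x|) * |D.W x|
      ≤ 1 * (x.2 ^ (N + 1) * |D.σ x|) * B := by
        gcongr
        · exact shellWeight_le_one
        · exact hW x hx
    _ = _ := by ring

lemma abs_energy_le {B : ℝ} (hW : ∀ x ∈ rect T a b, |D.W x| ≤ B) {x : ℝ × ℝ}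
    (hx : x ∈ rect T a b) : |D.energy x| ≤ B ^ 2 * (x.2 ^ (N + 1) * shellWeight N a x.2) := by
  have hr : 0 ≤ x.2 := D.ha.le.trans hx.2.1
  have hφ := shellWeight_pos (N := N) (a := a) (r := x.2)
  have hχ := massWeight_nonneg (N := N) (a := a) hr
  have hmass : massWeight N a x.2 * D.mass x ^ 2
      ≤ 2 * (B ^ 2 * (x.2 ^ (N + 1) * shellWeight N a x.2)) := by
    calc massWeight N a x.2 * D.mass x ^ 2
        ≤ massWeight N a x.2 * (B * (shell N a x.2 / (N + 2))) ^ 2 := by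
          gcongr massWeight N a x.2 * ?_
          exact sq_le_sq' (abs_le.1 (D.abs_mass_le hW hx)).1 (abs_le.1 (D.abs_mass_le hW hx)).2
      _ = B ^ 2 * (massWeight N a x.2 * (shell N a x.2 / (N + 2)) ^ 2) := by ring
      _ ≤ B ^ 2 * (2 * (x.2 ^ (N + 1) * shellWeight N a x.2)) :=
          mul_le_mul_of_nonneg_left (massWeight_mul_shell_sq_le hr) (sq_nonneg B)
      _ = _ := by ring
  have hWsq : x.2 ^ (N + 1) * shellWeight N a x.2 * D.W x ^ 2
      ≤ B ^ 2 * (x.2 ^ (N + 1) * shellWeight N a x.2) := by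
    rw [mul_comm (B ^ 2)]
    gcongr x.2 ^ (N + 1) * shellWeight N a x.2 * ?_
    exact sq_le_sq' (abs_le.1 (hW x hx)).1 (abs_le.1 (hW x hx)).2
  have hmass0 : 0 ≤ massWeight N a x.2 * D.mass x ^ 2 := by positivity
  have hWsq0 : 0 ≤ x.2 ^ (N + 1) * shellWeight N a x.2 * D.W x ^ 2 := by positivity
  rw [energy, abs_le]
  constructor <;> linarith

lemma energyFlux_left {t : ℝ} (ht : t ∈ Icc 0 T) : D.energyFlux (t, a) = 0 := by
  simp [energyFlux, D.G_left t ht, D.deficit_left t]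

lemma energyFlux_right_nonpos (hν : 0 ≤ ν) {t : ℝ} (ht : t ∈ Icc 0 T) :
    D.energyFlux (t, b) ≤ 0 := by
  have hφ := shellWeight_pos (N := N) (a := a) (r := b)
  have hb : 0 ≤ b := D.ha.le.trans D.hab
  simp only [energyFlux, D.W_right t ht, mul_zero, zero_mul, zero_sub, neg_nonpos]
  positivity

lemma integral_energyT_add_energyFluxR_le (hν : 0 ≤ ν) (ha1 : a ≤ 1) {B : ℝ}
    (hW : ∀ x ∈ rect T a b, |D.W x| ≤ B) :
    ∫ x in rect T a b, (D.energyT x + D.energyFluxR x) ≤ 8 * π * B ^ 2 := by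
  have hradial : ∫ t in (0)..T, (D.energyFlux (t, b) - D.energyFlux (t, a)) ≤ 0 :=
    neg_nonneg.1 <| by
      rw [← intervalIntegral.integral_neg]
      refine intervalIntegral.integral_nonneg D.hT fun t ht => ?_
      rw [D.energyFlux_left ht, sub_zero, neg_nonneg]
      exact D.energyFlux_right_nonpos hν ht
  have htime : ∫ r in a..b, (D.energy (T, r) - D.energy (0, r)) ≤ 2 * B ^ 2 * (4 * π) := by
    calc ∫ r in a..b, (D.energy (T, r) - D.energy (0, r))
        ≤ ∫ r in a..b, 2 * B ^ 2 * (r ^ (N + 1) * shellWeight N a r) := by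
          refine intervalIntegral.integral_mono_on D.hab
            (Continuous.intervalIntegrable (by unfold energy; fun_prop) _ _)
            (Continuous.intervalIntegrable (by fun_prop) _ _) fun r hr => ?_
          have hend := abs_le.1 (D.abs_energy_le hW (mem_rect ⟨D.hT, le_rfl⟩ hr))
          have hini := abs_le.1 (D.abs_energy_le hW (mem_rect ⟨le_rfl, D.hT⟩ hr))
          linarith [hend.2, hini.1]
      _ ≤ 2 * B ^ 2 * (4 * π) := by
          rw [intervalIntegral.integral_const_mul]
          gcongr
          exact integral_pow_mul_shellWeight_le D.ha ha1 D.hab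
  rw [integral_rect_divergence (by fun_prop) (by fun_prop) D.hT D.hab
    (fun t ht r hr => D.hasDerivAt_energy (mem_rect ht hr))
    (fun t _ r hr => D.hasDerivAt_energyFlux (D.ha.trans_le hr.1).ne')]
  linarith

lemma integral_shellWeight_mul_totalSource_le (ha1 : a ≤ 1) :
    ∫ x in rect T a b, x.2 ^ (N + 1) * shellWeight N a x.2 * D.totalSource x.1
      ≤ 4 * π * ∫ x in rect T a b, x.2 ^ (N + 1) * |D.σ x| := by
  calc ∫ x in rect T a b, x.2 ^ (N + 1) * shellWeight N a x.2 * D.totalSource x.1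
      ≤ ∫ t in (0)..T, 4 * π * D.totalSource t := by
        refine integral_rect_le_of_slice_le (by fun_prop) D.hT D.hab
          (Continuous.intervalIntegrable (by fun_prop) _ _) fun t ht => ?_
        simp only [intervalIntegral.integral_mul_const]
        exact mul_le_mul_of_nonneg_right (integral_pow_mul_shellWeight_le D.ha ha1 D.hab)
          ((abs_nonneg _).trans (D.abs_source_le (mem_rect ht ⟨le_rfl, D.hab⟩)))
    _ = 4 * π * ∫ x in rect T a b, x.2 ^ (N + 1) * |D.σ x| := by
        rw [intervalIntegral.integral_const_mul, integral_rect (by fun_prop) D.hT D.hab]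
        rfl

lemma le_energyT_add_energyFluxR_add (hν : 0 < ν) (ha1 : a ≤ 1) {B : ℝ}
    (hW : ∀ x ∈ rect T a b, |D.W x| ≤ B) {x : ℝ × ℝ} (hx : x ∈ rect T a b) :
    ν / (8 * (N + 4)) * (x.2 ^ (N + 1) * shellWeight N a x.2 * D.Wr x ^ 2)
      ≤ D.energyT x + D.energyFluxR x
        + 4 * (N + 4) * (N + 5) / ν * (x.2 ^ (N + 1) * (ν * D.Wr x - D.G x) ^ 2)
        + B * (x.2 ^ (N + 1) * |D.σ x|
          + (N + 3) * (x.2 ^ (N + 1) * shellWeight N a x.2 * D.totalSource x.1)) := by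
  have hr : 0 < x.2 := D.ha.trans_le hx.2.1
  have hφ := shellWeight_pos (N := N) (a := a) (r := x.2)
  have : 0 ≤ B := (abs_nonneg _).trans (hW x hx)
  have hform := mul_le_mul_of_nonneg_left (le_mul_productionForm_sub hν
    (m := N + 4) (z := (N + 3) * (x.2 ^ (N + 2)) ^ 2 / shellBase N a x.2)
    (θ := shell N a x.2 / x.2 ^ (N + 2)) (by linarith [(N.cast_nonneg : (0 : ℝ) ≤ N)])
    (div_nonneg (by positivity) shellBase_pos.le)
    (by
      rw [div_le_iff₀ shellBase_pos]
      linarith [pow_sq_mul_le_shellBase (N := N) D.ha.le ha1 hx.2.1])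
    (div_nonneg (shell_nonneg D.ha.le hx.2.1) (by positivity))
    (div_le_one_of_le₀ (shell_le_pow D.ha.le) (by positivity))
    (D.Wr x) ((N + 2) * D.deficit x / x.2 ^ (N + 3)) (ν * D.Wr x - D.G x))
    (by positivity : 0 ≤ x.2 ^ (N + 1) * shellWeight N a x.2)
  have hflux : x.2 ^ (N + 1) * shellWeight N a x.2
        * (4 * (N + 4) * (N + 4 + 1) * (ν * D.Wr x - D.G x) ^ 2 / ν)
      ≤ 4 * (N + 4) * (N + 5) / ν * (x.2 ^ (N + 1) * (ν * D.Wr x - D.G x) ^ 2) := by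
    calc _ = shellWeight N a x.2 * (4 * (N + 4) * (N + 5) / ν
            * (x.2 ^ (N + 1) * (ν * D.Wr x - D.G x) ^ 2)) := by ring
      _ ≤ _ := mul_le_of_le_one_left (by positivity) shellWeight_le_one
  have hMS := D.abs_massWeight_mul_mass_mul_source_le hW hx
  have hσW := D.abs_shellWeight_mul_σ_mul_W_le hW hx
  have hsum := D.energyT_add_energyFluxR hx
  have hsplit : x.2 ^ (N + 1) * shellWeight N a x.2 * (ν * D.Wr x ^ 2 / (8 * (N + 4)))
      = ν / (8 * (N + 4)) * (x.2 ^ (N + 1) * shellWeight N a x.2 * D.Wr x ^ 2) := by ring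
  rw [mul_sub, hsplit] at hform
  linarith [neg_abs_le (massWeight N a x.2 * D.mass x * D.source x),
    le_abs_self (shellWeight N a x.2 * (x.2 ^ (N + 1) * D.σ x) * D.W x)]

theorem integral_shellWeight_mul_Wr_sq_le (hν : 0 < ν) (ha1 : a ≤ 1) {B F Q : ℝ}
    (hW : ∀ x ∈ rect T a b, |D.W x| ≤ B)
    (hF : ∫ x in rect T a b, x.2 ^ (N + 1) * (ν * D.Wr x - D.G x) ^ 2 ≤ F)
    (hQ : ∫ x in rect T a b, x.2 ^ (N + 1) * |D.σ x| ≤ Q) :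
    ν / (8 * (N + 4)) * ∫ x in rect T a b, x.2 ^ (N + 1) * shellWeight N a x.2 * D.Wr x ^ 2
      ≤ 8 * π * B ^ 2 + 4 * (N + 4) * (N + 5) / ν * F + B * (1 + (N + 3) * (4 * π)) * Q := by
  have : 0 ≤ B := (abs_nonneg _).trans (hW (0, a) (mem_rect ⟨le_rfl, D.hT⟩ ⟨le_rfl, D.hab⟩))
  have hmono := integral_rect_mono (by fun_prop) (by fun_prop) fun x hx =>
    D.le_energyT_add_energyFluxR_add hν ha1 hW hx
  rw [integral_rect_add (by fun_prop) (by fun_prop), integral_rect_add (by fun_prop) (by fun_prop),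
    integral_const_mul, integral_const_mul, integral_const_mul,
    integral_rect_add (f := fun x => x.2 ^ (N + 1) * |D.σ x|) (by fun_prop) (by fun_prop),
    integral_const_mul] at hmono
  refine hmono.trans ?_
  have hsource : (∫ x in rect T a b, x.2 ^ (N + 1) * |D.σ x|) + (N + 3) *
      ∫ x in rect T a b, x.2 ^ (N + 1) * shellWeight N a x.2 * D.totalSource x.1
      ≤ (1 + (N + 3) * (4 * π)) * Q := by
    calc _ ≤ Q + (N + 3) * (4 * π * Q) := by
          gcongr
          exact (D.integral_shellWeight_mul_totalSource_le ha1).trans (by gcongr)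
      _ = _ := by ring
  rw [mul_assoc B]
  gcongr
  exact D.integral_energyT_add_energyFluxR_le hν.le ha1 hW

theorem integral_Wr_sq_le (hν : 0 < ν) (ha1 : a ≤ 1) (hb : 2 ≤ b) {B F Q : ℝ}
    (hW : ∀ x ∈ rect T a b, |D.W x| ≤ B)
    (hF : ∫ x in rect T a b, x.2 ^ (N + 1) * (ν * D.Wr x - D.G x) ^ 2 ≤ F)
    (hQ : ∫ x in rect T a b, x.2 ^ (N + 1) * |D.σ x| ≤ Q) :
    ν * ∫ x in rect T a 2, x.2 ^ (N + 1) * D.Wr x ^ 2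
      ≤ (2 * (N + 3) + (2 ^ (N + 2)) ^ 2) * (8 * (N + 4)) * (8 * π * B ^ 2
        + 4 * (N + 4) * (N + 5) / ν * F + B * (1 + (N + 3) * (4 * π)) * Q) := by
  set c : ℝ := 2 * (N + 3) + (2 ^ (N + 2)) ^ 2
  have hc : 0 < c := by positivity
  have hlocal : ∫ x in rect T a 2, x.2 ^ (N + 1) * D.Wr x ^ 2
      ≤ c * ∫ x in rect T a b, x.2 ^ (N + 1) * shellWeight N a x.2 * D.Wr x ^ 2 := by
    calc ∫ x in rect T a 2, x.2 ^ (N + 1) * D.Wr x ^ 2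
        ≤ ∫ x in rect T a 2, c * (x.2 ^ (N + 1) * shellWeight N a x.2 * D.Wr x ^ 2) := by
          refine integral_rect_mono (by fun_prop) (by fun_prop) fun x hx => ?_
          have hr : 0 ≤ x.2 := D.ha.le.trans hx.2.1
          have hφ : 1 ≤ c * shellWeight N a x.2 := by
            rw [← div_le_iff₀' hc, one_div]
            exact le_shellWeight_of_le_two D.ha.le hx.2.1 hx.2.2
          calc x.2 ^ (N + 1) * D.Wr x ^ 2
              ≤ c * shellWeight N a x.2 * (x.2 ^ (N + 1) * D.Wr x ^ 2) :=
                le_mul_of_one_le_left (by positivity) hφ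
            _ = _ := by ring
      _ ≤ _ := by
          rw [integral_const_mul]
          refine mul_le_mul_of_nonneg_left
            (integral_rect_mono_right (by fun_prop) (fun x hx => ?_) hb) hc.le
          have hr : 0 ≤ x.2 := D.ha.le.trans hx.2.1
          have hφ := shellWeight_pos (N := N) (a := a) (r := x.2)
          positivity
  have hweighted := D.integral_shellWeight_mul_Wr_sq_le hν ha1 hW hF hQ
  rw [div_mul_eq_mul_div, div_le_iff₀ (by positivity)] at hweighted
  calc _ ≤ ν * (c * _) := mul_le_mul_of_nonneg_left hlocal hν.le
    _ = c * (ν * _) := by ring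
    _ ≤ c * _ := mul_le_mul_of_nonneg_left hweighted hc.le
    _ = _ := by ring

end RadialDiffusion

lemma rpow_tangent_le {γ x y : ℝ} (hγ : 1 ≤ γ) (hx : 0 < x) (hy : 0 < y) :
    y ^ γ + γ * y ^ (γ - 1) * (x - y) ≤ x ^ γ := by
  have hratio : 0 < x / y := div_pos hx hy
  have hbernoulli : 1 + γ * (x / y - 1) ≤ (x / y) ^ γ := by
    simpa using one_add_mul_self_le_rpow_one_add (s := x / y - 1) (by linarith) hγ
  calc y ^ γ + γ * y ^ (γ - 1) * (x - y) = y ^ γ * (1 + γ * (x / y - 1)) := by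
        rw [rpow_sub_one hy.ne']
        field_simp
    _ ≤ y ^ γ * (x / y) ^ γ := by gcongr
    _ = x ^ γ := by rw [← mul_rpow hy.le hratio.le, mul_div_cancel₀ x hy.ne']

lemma hBarDelta_eq {γ δ ρ ρbar : ℝ} (hγ : 1 < γ) :
    hBarDelta γ ((γ - 1) ^ (2:ℕ) / (4 * γ)) δ ρ ρbar
      = (γ - 1) / (4 * γ) * (ρ ^ γ - ρbar ^ γ - γ * ρbar ^ (γ - 1) * (ρ - ρbar))
        + δ * (ρ - ρbar) ^ 2 := by
  have : 0 < γ := by linarith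
  have : 0 < γ - 1 := by linarith
  unfold hBarDelta hDelta hDelta'
  field_simp
  ring

-- Convexity is used twice: the tangent at `μ` lies below `ρ ↦ ρ ^ γ` at `ρ`, and the tangent at
-- `ρbar` lies below it at `μ`.
lemma le_hBarDelta {γ δ ρ ρbar μ : ℝ} (hγ : 1 < γ) (hδ : 0 < δ) (hρ : 0 < ρ) (hρbar : 0 < ρbar)
    (hμ : 0 < μ) : (γ - 1) / 4 * ((μ ^ (γ - 1) - ρbar ^ (γ - 1)) * (ρ - μ))
      ≤ hBarDelta γ ((γ - 1) ^ (2:ℕ) / (4 * γ)) δ ρ ρbar := by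
  have : 0 < γ := by linarith
  have hγ1 : 0 < γ - 1 := by linarith
  have hquad : 0 ≤ δ * (ρ - ρbar) ^ 2 := by positivity
  rw [hBarDelta_eq hγ]
  calc (γ - 1) / 4 * ((μ ^ (γ - 1) - ρbar ^ (γ - 1)) * (ρ - μ))
      = (γ - 1) / (4 * γ) * (γ * ((μ ^ (γ - 1) - ρbar ^ (γ - 1)) * (ρ - μ))) := by field_simp
    _ ≤ (γ - 1) / (4 * γ) * (ρ ^ γ - ρbar ^ γ - γ * ρbar ^ (γ - 1) * (ρ - ρbar)) := by
        gcongr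
        linarith [rpow_tangent_le hγ.le hρ hμ, rpow_tangent_le hγ.le hμ hρbar]
    _ ≤ _ := le_add_of_nonneg_right hquad

lemma hBarDelta_nonneg {γ δ ρ ρbar : ℝ} (hγ : 1 < γ) (hδ : 0 < δ) (hρ : 0 < ρ)
    (hρbar : 0 < ρbar) : 0 ≤ hBarDelta γ ((γ - 1) ^ (2:ℕ) / (4 * γ)) δ ρ ρbar := by
  simpa using le_hBarDelta hγ hδ hρ hρbar hρbar

/-- The constant `C` in the bound `ρ ≤ 3/2 + C h̄_δ(ρ, ρ̄)` of the density by the relative internal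
energy, valid for `ρ̄ ≤ 1`. -/
def growthConst (γ : ℝ) : ℝ := 4 / ((γ - 1) * ((3 / 2 : ℝ) ^ (γ - 1) - 1))

lemma growthConst_nonneg {γ : ℝ} (hγ : 1 < γ) : 0 ≤ growthConst γ := by
  have hγ1 : 0 < γ - 1 := by linarith
  have hpow : 1 < (3 / 2 : ℝ) ^ (γ - 1) := one_lt_rpow (by norm_num) hγ1
  exact div_nonneg (by norm_num) (mul_nonneg hγ1.le (by linarith))

lemma density_le_hBarDelta {γ δ ρ ρbar : ℝ} (hγ : 1 < γ) (hδ : 0 < δ) (hρ : 0 < ρ)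
    (hρbar : 0 < ρbar) (hρbar1 : ρbar ≤ 1) :
    ρ ≤ 3 / 2 + growthConst γ * hBarDelta γ ((γ - 1) ^ (2:ℕ) / (4 * γ)) δ ρ ρbar := by
  have hγ1 : 0 < γ - 1 := by linarith
  have hpow : 1 < (3 / 2 : ℝ) ^ (γ - 1) := one_lt_rpow (by norm_num) hγ1
  have hC := growthConst_nonneg hγ
  rcases le_total ρ (3 / 2) with hsmall | hlarge
  · linarith [mul_nonneg hC (hBarDelta_nonneg hγ hδ hρ hρbar)]
  have hρbar_pow : ρbar ^ (γ - 1) ≤ 1 := rpow_le_one hρbar.le hρbar1 hγ1.le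
  have hlower : (γ - 1) / 4 * (((3 / 2 : ℝ) ^ (γ - 1) - 1) * (ρ - 3 / 2))
      ≤ hBarDelta γ ((γ - 1) ^ (2:ℕ) / (4 * γ)) δ ρ ρbar :=
    le_trans (by gcongr) (le_hBarDelta hγ hδ hρ hρbar (μ := 3 / 2) (by norm_num))
  have hexcess : growthConst γ * ((γ - 1) / 4 * (((3 / 2 : ℝ) ^ (γ - 1) - 1) * (ρ - 3 / 2)))
      = ρ - 3 / 2 := by
    have : (3 / 2 : ℝ) ^ (γ - 1) - 1 ≠ 0 := by linarith
    unfold growthConst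
    field_simp
  linarith [mul_le_mul_of_nonneg_left hlower hC]

/-- The partial derivative of a function on the plane with respect to the first variable. -/
def partialFst (f : ℝ × ℝ → ℝ) (x : ℝ × ℝ) : ℝ := deriv (fun s => f (s, x.2)) x.1

/-- The partial derivative of a function on the plane with respect to the second variable. -/
def partialSnd (f : ℝ × ℝ → ℝ) (x : ℝ × ℝ) : ℝ := deriv (fun y => f (x.1, y)) x.2

section partials

variable {f : ℝ × ℝ → ℝ}

lemma hasDerivAt_slice_fst (hf : Differentiable ℝ f) (x : ℝ × ℝ) :
    HasDerivAt (fun s => f (s, x.2)) (fderiv ℝ f x (1, 0)) x.1 :=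
  (hf x).hasFDerivAt.comp_hasDerivAt x.1 ((hasDerivAt_id x.1).prodMk (hasDerivAt_const x.1 x.2))

lemma hasDerivAt_slice_snd (hf : Differentiable ℝ f) (x : ℝ × ℝ) :
    HasDerivAt (fun y => f (x.1, y)) (fderiv ℝ f x (0, 1)) x.2 :=
  (hf x).hasFDerivAt.comp_hasDerivAt x.2 ((hasDerivAt_const x.2 x.1).prodMk (hasDerivAt_id x.2))

lemma hasDerivAt_partialFst (hf : Differentiable ℝ f) (t r : ℝ) :
    HasDerivAt (fun s => f (s, r)) (partialFst f (t, r)) t :=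
  (hasDerivAt_slice_fst hf (t, r)).differentiableAt.hasDerivAt

lemma hasDerivAt_partialSnd (hf : Differentiable ℝ f) (t r : ℝ) :
    HasDerivAt (fun y => f (t, y)) (partialSnd f (t, r)) r :=
  (hasDerivAt_slice_snd hf (t, r)).differentiableAt.hasDerivAt

lemma contDiff_partialFst (hf : ContDiff ℝ (⊤ : ℕ∞) f) : ContDiff ℝ (⊤ : ℕ∞) (partialFst f) := by
  rw [show partialFst f = fun x => fderiv ℝ f x (1, 0) from
    funext fun x => (hasDerivAt_slice_fst (hf.differentiable (by simp)) x).deriv]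
  exact (hf.fderiv_right (m := (⊤ : ℕ∞)) (by simp)).clm_apply contDiff_const

lemma contDiff_partialSnd (hf : ContDiff ℝ (⊤ : ℕ∞) f) : ContDiff ℝ (⊤ : ℕ∞) (partialSnd f) := by
  rw [show partialSnd f = fun x => fderiv ℝ f x (0, 1) from
    funext fun x => (hasDerivAt_slice_snd (hf.differentiable (by simp)) x).deriv]
  exact (hf.fderiv_right (m := (⊤ : ℕ∞)) (by simp)).clm_apply contDiff_const

end partials

lemma integral_pow_succ_le {a b : ℝ} (ha : 0 ≤ a) (hab : a ≤ b) (N : ℕ) :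
    ∫ r in a..b, r ^ (N + 1) ≤ b ^ (N + 2) := by
  have ha' : 0 ≤ a ^ (N + 2) := pow_nonneg ha _
  have hab' : a ^ (N + 2) ≤ b ^ (N + 2) := pow_le_pow_left₀ ha hab _
  rw [integral_pow]
  refine (div_le_self (sub_nonneg.2 hab') ?_).trans (by linarith)
  push_cast
  linarith [(N.cast_nonneg : (0 : ℝ) ≤ N)]

namespace ViscousSetup

variable {N : ℕ} {γ T E₀ : ℝ} (S : ViscousSetup (N + 2) γ T E₀)

/-- The density as a function of the point `(t, r)`. -/
def dens (x : ℝ × ℝ) : ℝ := S.ρ x.1 x.2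
/-- The momentum as a function of the point `(t, r)`. -/
def mom (x : ℝ × ℝ) : ℝ := S.m x.1 x.2
/-- The time derivative `ρ_t`. -/
def densT : ℝ × ℝ → ℝ := partialFst S.dens
/-- The radial derivative `ρ_r`. -/
def densR : ℝ × ℝ → ℝ := partialSnd S.dens
/-- The second radial derivative `ρ_rr`. -/
def densRR : ℝ × ℝ → ℝ := partialSnd S.densR
/-- The radial derivative `m_r`. -/
def momR : ℝ × ℝ → ℝ := partialSnd S.mom
/-- The radial derivative `u_r` of the velocity `u = m / ρ`, written out by the quotient rule. -/
def velR (x : ℝ × ℝ) : ℝ := (S.momR x * S.dens x - S.mom x * S.densR x) / S.dens x ^ 2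

lemma contDiff_dens : ContDiff ℝ (⊤ : ℕ∞) S.dens := S.smooth_ρ
lemma contDiff_mom : ContDiff ℝ (⊤ : ℕ∞) S.mom := S.smooth_m
lemma contDiff_densR : ContDiff ℝ (⊤ : ℕ∞) S.densR := contDiff_partialSnd S.contDiff_dens

@[fun_prop] lemma continuous_dens : Continuous S.dens := S.contDiff_dens.continuous
@[fun_prop] lemma continuous_mom : Continuous S.mom := S.contDiff_mom.continuous
@[fun_prop] lemma continuous_densT : Continuous S.densT :=
  (contDiff_partialFst S.contDiff_dens).continuous
@[fun_prop] lemma continuous_densR : Continuous S.densR := S.contDiff_densR.continuous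
@[fun_prop] lemma continuous_densRR : Continuous S.densRR :=
  (contDiff_partialSnd S.contDiff_densR).continuous
@[fun_prop] lemma continuous_momR : Continuous S.momR :=
  (contDiff_partialSnd S.contDiff_mom).continuous

lemma hasDerivAt_dens_fst (t r : ℝ) : HasDerivAt (fun s => S.dens (s, r)) (S.densT (t, r)) t :=
  hasDerivAt_partialFst (S.contDiff_dens.differentiable (by simp)) t r

lemma hasDerivAt_dens_snd (t r : ℝ) : HasDerivAt (fun y => S.dens (t, y)) (S.densR (t, r)) r :=
  hasDerivAt_partialSnd (S.contDiff_dens.differentiable (by simp)) t r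

lemma hasDerivAt_densR_snd (t r : ℝ) :
    HasDerivAt (fun y => S.densR (t, y)) (S.densRR (t, r)) r :=
  hasDerivAt_partialSnd (S.contDiff_densR.differentiable (by simp)) t r

lemma hasDerivAt_mom_snd (t r : ℝ) : HasDerivAt (fun y => S.mom (t, y)) (S.momR (t, r)) r :=
  hasDerivAt_partialSnd (S.contDiff_mom.differentiable (by simp)) t r

lemma dens_pos {x : ℝ × ℝ} (hx : x ∈ rect T S.a S.b) : 0 < S.dens x :=
  S.hcε.trans_le (S.pos x.1 hx.1 x.2 hx.2)

lemma dens_ne_zero {x : ℝ × ℝ} (hx : x ∈ rect T S.a S.b) : S.dens x ≠ 0 := (S.dens_pos hx).ne'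

lemma radius_pos {x : ℝ × ℝ} (hx : x ∈ rect T S.a S.b) : 0 < x.2 := S.ha0.trans_le hx.2.1

lemma a_lt_b : S.a < S.b := S.ha1.trans S.hb

lemma a_le_two : S.a ≤ 2 := by linarith [S.ha1]

lemma rect_two_subset (hb : 2 ≤ S.b) : rect T S.a 2 ⊆ rect T S.a S.b :=
  prod_mono_right (Icc_subset_Icc_right hb)

-- Both sides are continuous, so the equation extends from the open to the closed rectangle.
lemma continuity {x : ℝ × ℝ} (hx : x ∈ rect T S.a S.b) :
    x.2 ^ (N + 1) * S.densT x + (x.2 ^ (N + 1) * S.momR x + (N + 1) * x.2 ^ N * S.mom x)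
      = S.ε * (x.2 ^ (N + 1) * S.densRR x + (N + 1) * x.2 ^ N * S.densR x) := by
  have hopen : EqOn (fun x : ℝ × ℝ => x.2 ^ (N + 1) * S.densT x
      + (x.2 ^ (N + 1) * S.momR x + (N + 1) * x.2 ^ N * S.mom x))
      (fun x => S.ε * (x.2 ^ (N + 1) * S.densRR x + (N + 1) * x.2 ^ N * S.densR x))
      (Ioo 0 T ×ˢ Ioo S.a S.b) := by
    rintro ⟨t, r⟩ ⟨ht, hr⟩
    have heq : r ^ (N + 1) * S.densT (t, r) + deriv (fun y => y ^ (N + 1) * S.m t y) r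
        = S.ε * deriv (fun y => y ^ (N + 1) * S.densR (t, y)) r := S.continuity_eq t ht r hr
    have hflux : deriv (fun y => y ^ (N + 1) * S.m t y) r
        = (N + 1) * r ^ N * S.mom (t, r) + r ^ (N + 1) * S.momR (t, r) :=
      ((hasDerivAt_pow_succ N r).mul (S.hasDerivAt_mom_snd t r)).deriv
    have hvisc : deriv (fun y => y ^ (N + 1) * S.densR (t, y)) r
        = (N + 1) * r ^ N * S.densR (t, r) + r ^ (N + 1) * S.densRR (t, r) :=
      ((hasDerivAt_pow_succ N r).mul (S.hasDerivAt_densR_snd t r)).deriv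
    rw [hflux, hvisc] at heq
    simp only
    linarith
  have hclosed := hopen.closure (by fun_prop) (by fun_prop)
  rw [closure_prod_eq, closure_Ioo S.hT.ne, closure_Ioo S.a_lt_b.ne] at hclosed
  exact hclosed hx

lemma densR_left {t : ℝ} (ht : t ∈ Icc 0 T) : S.densR (t, S.a) = 0 := S.bc_ρr t ht
lemma mom_left {t : ℝ} (ht : t ∈ Icc 0 T) : S.mom (t, S.a) = 0 := S.bc_ma t ht
lemma dens_right {t : ℝ} (ht : t ∈ Icc 0 T) : S.dens (t, S.b) = S.ρbar := S.bc_ρb t ht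

lemma hasDerivAt_vel {t r : ℝ} (hx : (t, r) ∈ rect T S.a S.b) :
    HasDerivAt (fun y => S.mom (t, y) / S.dens (t, y)) (S.velR (t, r)) r :=
  (S.hasDerivAt_mom_snd t r).div (S.hasDerivAt_dens_snd t r) (S.dens_ne_zero hx)

/-- The relative internal energy density `h̄_δ(ρ, ρ̄)` along the solution. -/
def relEnergy (x : ℝ × ℝ) : ℝ :=
  hBarDelta γ ((γ - 1) ^ (2:ℕ) / (4 * γ)) S.δ (S.dens x) S.ρbar

lemma relEnergy_nonneg {x : ℝ × ℝ} (hx : x ∈ rect T S.a S.b) : 0 ≤ S.relEnergy x :=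
  hBarDelta_nonneg S.hγ S.hδ (S.dens_pos hx) S.hρbar

@[fun_prop] lemma continuousOn_dens_rpow (p : ℝ) :
    ContinuousOn (fun x => S.dens x ^ p) (rect T S.a S.b) :=
  S.continuous_dens.continuousOn.rpow_const fun _ hx => Or.inl (S.dens_ne_zero hx)

@[fun_prop] lemma continuousOn_vel :
    ContinuousOn (fun x => S.mom x / S.dens x) (rect T S.a S.b) :=
  ContinuousOn.div (by fun_prop) (by fun_prop) fun _ hx => S.dens_ne_zero hx

@[fun_prop] lemma continuousOn_mom_sq_div :
    ContinuousOn (fun x => S.mom x ^ 2 / S.dens x) (rect T S.a S.b) :=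
  ContinuousOn.div (by fun_prop) (by fun_prop) fun _ hx => S.dens_ne_zero hx

@[fun_prop] lemma continuousOn_velR : ContinuousOn S.velR (rect T S.a S.b) :=
  ContinuousOn.div (by fun_prop) (by fun_prop) fun _ hx => pow_ne_zero 2 (S.dens_ne_zero hx)

@[fun_prop] lemma continuousOn_relEnergy : ContinuousOn S.relEnergy (rect T S.a S.b) := by
  unfold relEnergy hBarDelta hDelta
  fun_prop

/-- The density `½ ρu² + h̄_δ(ρ, ρ̄)` of the total energy. -/
def energyDensity (x : ℝ × ℝ) : ℝ := 1 / 2 * (S.mom x ^ 2 / S.dens x) + S.relEnergy x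

@[fun_prop] lemma continuousOn_energyDensity : ContinuousOn S.energyDensity (rect T S.a S.b) := by
  unfold energyDensity
  fun_prop

lemma kinetic_nonneg {x : ℝ × ℝ} (hx : x ∈ rect T S.a S.b) : 0 ≤ S.mom x ^ 2 / S.dens x :=
  div_nonneg (sq_nonneg _) (S.dens_pos hx).le

/-- The space-time density of the dissipated energy in the energy estimate. -/
def dissipation (x : ℝ × ℝ) : ℝ :=
  ((γ - 1) ^ 2 / 4 * (S.dens x ^ (γ - 2) * S.densR x ^ 2) + 2 * S.δ * S.densR x ^ 2)
    + S.dens x * S.velR x ^ 2 + (N + 1) * (S.mom x ^ 2 / S.dens x) / x.2 ^ 2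

@[fun_prop] lemma continuousOn_dissipation : ContinuousOn S.dissipation (rect T S.a S.b) :=
  ContinuousOn.add (by fun_prop) (ContinuousOn.div (by fun_prop) (by fun_prop)
    fun _ hx => pow_ne_zero 2 (S.radius_pos hx).ne')

lemma dissipation_nonneg {x : ℝ × ℝ} (hx : x ∈ rect T S.a S.b) : 0 ≤ S.dissipation x := by
  have := S.dens_pos hx
  have := S.radius_pos hx
  have := S.hδ
  unfold dissipation
  positivity

lemma energy_le {t : ℝ} (ht : t ∈ Icc 0 T) :
    (∫ r in S.a..S.b, r ^ (N + 1) * S.energyDensity (t, r))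
      + S.ε * ∫ x in rect T S.a S.b, x.2 ^ (N + 1) * S.dissipation x ≤ E₀ := by
  have henergy := S.energy t ht
  have hγ : 0 < γ := by linarith [S.hγ]
  rw [integral_rect (f := fun x => x.2 ^ (N + 1) * S.dissipation x) (by fun_prop) S.hT.le
    S.a_lt_b.le]
  rw [setIntegral_Ioo_eq S.a_lt_b.le, setIntegral_Ioo_eq S.hT.le] at henergy
  refine le_trans (le_of_eq (congrArg₂ (· + ·) ?_ (congrArg (S.ε * ·) ?_))) henergy
  · refine intervalIntegral.integral_congr fun r hr => ?_
    rw [uIcc_of_le S.a_lt_b.le] at hr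
    have hρ := S.dens_ne_zero (mem_rect ht hr)
    simp only [energyDensity, relEnergy, dens, mom, Nat.add_succ_sub_one] at hρ ⊢
    field_simp
  · refine intervalIntegral.integral_congr fun s hs => ?_
    rw [uIcc_of_le S.hT.le] at hs
    simp only
    rw [setIntegral_Ioo_eq S.a_lt_b.le]
    refine intervalIntegral.integral_congr fun r hr => ?_
    rw [uIcc_of_le S.a_lt_b.le] at hr
    have hρ := S.dens_ne_zero (mem_rect hs hr)
    have hu : deriv (fun y => S.m s y / S.ρ s y) r = S.velR (s, r) :=
      (S.hasDerivAt_vel (mem_rect hs hr)).deriv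
    have hρr : deriv (fun y => S.ρ s y) r = S.densR (s, r) := rfl
    simp only [hu, hρr, dissipation, dens, mom, Nat.add_succ_sub_one, hDelta''] at hρ ⊢
    push_cast
    field_simp
    ring

lemma integral_dissipation_le :
    S.ε * ∫ x in rect T S.a S.b, x.2 ^ (N + 1) * S.dissipation x ≤ E₀ := by
  have h0 : (0 : ℝ) ∈ Icc 0 T := ⟨le_rfl, S.hT.le⟩
  refine le_trans (le_add_of_nonneg_left ?_) (S.energy_le h0)
  refine intervalIntegral.integral_nonneg S.a_lt_b.le fun r hr => ?_
  have hx := mem_rect h0 hr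
  have := S.radius_pos hx
  have := S.kinetic_nonneg hx
  have := S.relEnergy_nonneg hx
  unfold energyDensity
  positivity

lemma slice_energyDensity_le {t : ℝ} (ht : t ∈ Icc 0 T) :
    ∫ r in S.a..S.b, r ^ (N + 1) * S.energyDensity (t, r) ≤ E₀ := by
  refine le_trans (le_add_of_nonneg_right (mul_nonneg S.hε.le ?_)) (S.energy_le ht)
  exact integral_rect_nonneg fun _ hx =>
    mul_nonneg (pow_nonneg (S.radius_pos hx).le _) (S.dissipation_nonneg hx)

lemma E₀_nonneg (S : ViscousSetup (N + 2) γ T E₀) : 0 ≤ E₀ :=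
  (mul_nonneg S.hε.le (integral_rect_nonneg fun _ hx =>
    mul_nonneg (pow_nonneg (S.radius_pos hx).le _) (S.dissipation_nonneg hx))).trans
    S.integral_dissipation_le

lemma slice_le_of_le {C : ℝ} {f : ℝ × ℝ → ℝ} (hf : ContinuousOn f (rect T S.a S.b)) {t : ℝ}
    (ht : t ∈ Icc 0 T) (hC : 0 ≤ C) (h : ∀ x ∈ rect T S.a S.b, f x ≤ C * S.energyDensity x) :
    ∫ r in S.a..S.b, r ^ (N + 1) * f (t, r) ≤ C * E₀ := by
  refine le_trans ?_ (mul_le_mul_of_nonneg_left (S.slice_energyDensity_le ht) hC)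
  rw [← intervalIntegral.integral_const_mul]
  refine intervalIntegral.integral_mono_on S.a_lt_b.le
    (intervalIntegrable_of_continuousOn_Icc (continuousOn_slice_snd
      (f := fun x => x.2 ^ (N + 1) * f x) (by fun_prop) ht) S.a_lt_b.le)
    (intervalIntegrable_of_continuousOn_Icc (continuousOn_slice_snd
      (f := fun x => C * (x.2 ^ (N + 1) * S.energyDensity x)) (by fun_prop) ht) S.a_lt_b.le)
    fun r hr => ?_
  have hpow := pow_nonneg (S.radius_pos (mem_rect ht hr)).le (N + 1)
  rw [mul_left_comm]
  exact mul_le_mul_of_nonneg_left (h _ (mem_rect ht hr)) hpow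

lemma slice_kinetic_le {t : ℝ} (ht : t ∈ Icc 0 T) :
    ∫ r in S.a..S.b, r ^ (N + 1) * (S.mom (t, r) ^ 2 / S.dens (t, r)) ≤ 2 * E₀ :=
  S.slice_le_of_le (f := fun x => S.mom x ^ 2 / S.dens x) (by fun_prop) ht (by norm_num)
    fun x hx => by unfold energyDensity; linarith [S.relEnergy_nonneg hx]

lemma slice_relEnergy_le {t : ℝ} (ht : t ∈ Icc 0 T) :
    ∫ r in S.a..S.b, r ^ (N + 1) * S.relEnergy (t, r) ≤ E₀ := by
  simpa using S.slice_le_of_le (f := S.relEnergy) (by fun_prop) ht zero_le_one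
    fun x hx => by unfold energyDensity; linarith [S.kinetic_nonneg hx]

lemma integral_le_of_le {C : ℝ} {f : ℝ × ℝ → ℝ} (hf : ContinuousOn f (rect T S.a S.b))
    (hC : 0 ≤ C) (h : ∀ x ∈ rect T S.a S.b, f x ≤ C * S.dissipation x) :
    S.ε * ∫ x in rect T S.a S.b, x.2 ^ (N + 1) * f x ≤ C * E₀ := by
  have hmono : ∫ x in rect T S.a S.b, x.2 ^ (N + 1) * f x
      ≤ C * ∫ x in rect T S.a S.b, x.2 ^ (N + 1) * S.dissipation x := by
    rw [← integral_const_mul]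
    refine integral_rect_mono (by fun_prop) (by fun_prop) fun x hx => ?_
    rw [mul_left_comm]
    exact mul_le_mul_of_nonneg_left (h x hx) (pow_nonneg (S.radius_pos hx).le _)
  calc S.ε * ∫ x in rect T S.a S.b, x.2 ^ (N + 1) * f x
      ≤ S.ε * (C * ∫ x in rect T S.a S.b, x.2 ^ (N + 1) * S.dissipation x) :=
        mul_le_mul_of_nonneg_left hmono S.hε.le
    _ = C * (S.ε * ∫ x in rect T S.a S.b, x.2 ^ (N + 1) * S.dissipation x) := mul_left_comm ..
    _ ≤ C * E₀ := mul_le_mul_of_nonneg_left S.integral_dissipation_le hC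

lemma integral_densR_sq_le :
    S.ε * ∫ x in rect T S.a S.b, x.2 ^ (N + 1) * (S.dens x ^ (γ - 2) * S.densR x ^ 2)
      ≤ 4 / (γ - 1) ^ 2 * E₀ := by
  refine S.integral_le_of_le (by fun_prop) (by positivity) fun x hx => ?_
  have := S.dens_pos hx
  have := S.radius_pos hx
  have := S.hδ
  have hγ : 0 < γ - 1 := by linarith [S.hγ]
  have hrest : 0 ≤ 2 * S.δ * S.densR x ^ 2 + S.dens x * S.velR x ^ 2
    + (N + 1) * (S.mom x ^ 2 / S.dens x) / x.2 ^ 2 := by positivity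
  calc S.dens x ^ (γ - 2) * S.densR x ^ 2
      = 4 / (γ - 1) ^ 2 * ((γ - 1) ^ 2 / 4 * (S.dens x ^ (γ - 2) * S.densR x ^ 2)) := by
        field_simp
    _ ≤ 4 / (γ - 1) ^ 2 * S.dissipation x := by
        gcongr
        unfold dissipation
        linarith

lemma integral_velR_sq_le :
    S.ε * ∫ x in rect T S.a S.b, x.2 ^ (N + 1) * (S.dens x * S.velR x ^ 2) ≤ E₀ := by
  have hle : ∀ x ∈ rect T S.a S.b, S.dens x * S.velR x ^ 2 ≤ 1 * S.dissipation x := by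
    intro x hx
    have := S.dens_pos hx
    have := S.radius_pos hx
    have := S.hδ
    have hrest : 0 ≤ (γ - 1) ^ 2 / 4 * (S.dens x ^ (γ - 2) * S.densR x ^ 2)
      + 2 * S.δ * S.densR x ^ 2 + (N + 1) * (S.mom x ^ 2 / S.dens x) / x.2 ^ 2 := by positivity
    unfold dissipation
    linarith
  simpa using S.integral_le_of_le (by fun_prop) zero_le_one hle

end ViscousSetup

/-- The bound for the mass `∫ ρ r^{n-1} dr` of the ball `r ≤ 2`, where `n = N + 2`. -/
def massConst (N : ℕ) (γ E₀ : ℝ) : ℝ := 3 / 2 * 2 ^ (N + 2) + growthConst γ * E₀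

namespace ViscousSetup

variable {N : ℕ} {γ T E₀ : ℝ} (S : ViscousSetup (N + 2) γ T E₀)

lemma slice_relEnergy_two_le (hb : 2 ≤ S.b) {t : ℝ} (ht : t ∈ Icc 0 T) :
    ∫ r in S.a..2, r ^ (N + 1) * S.relEnergy (t, r) ≤ E₀ := by
  refine le_trans ?_ (S.slice_relEnergy_le ht)
  refine intervalIntegral.integral_mono_interval le_rfl S.a_le_two hb ?_
    (intervalIntegrable_of_continuousOn_Icc (continuousOn_slice_snd
      (f := fun x => x.2 ^ (N + 1) * S.relEnergy x) (by fun_prop) ht) S.a_lt_b.le)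
  refine (ae_restrict_iff' measurableSet_Ioc).2 (Filter.Eventually.of_forall fun r hr => ?_)
  have hx := mem_rect ht (Ioc_subset_Icc_self hr)
  exact mul_nonneg (pow_nonneg (S.radius_pos hx).le _) (S.relEnergy_nonneg hx)

lemma slice_dens_le (hρ : S.ρbar ≤ 1) (hb : 2 ≤ S.b) {t : ℝ} (ht : t ∈ Icc 0 T) :
    ∫ r in S.a..2, r ^ (N + 1) * S.dens (t, r) ≤ massConst N γ E₀ := by
  have hrel : IntervalIntegrable (fun r => r ^ (N + 1) * S.relEnergy (t, r)) volume S.a 2 :=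
    intervalIntegrable_of_continuousOn_Icc ((continuousOn_slice_snd
      (f := fun x => x.2 ^ (N + 1) * S.relEnergy x) (by fun_prop) ht).mono
      (Icc_subset_Icc_right hb)) S.a_le_two
  have hpow : IntervalIntegrable (fun r : ℝ => r ^ (N + 1)) volume S.a 2 :=
    (by fun_prop : Continuous _).intervalIntegrable _ _
  have hpoint : ∀ r ∈ Icc S.a 2, r ^ (N + 1) * S.dens (t, r)
      ≤ 3 / 2 * r ^ (N + 1) + growthConst γ * (r ^ (N + 1) * S.relEnergy (t, r)) := by
    intro r hr
    have hx := S.rect_two_subset hb (mem_rect ht hr)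
    calc r ^ (N + 1) * S.dens (t, r)
        ≤ r ^ (N + 1) * (3 / 2 + growthConst γ * S.relEnergy (t, r)) :=
          mul_le_mul_of_nonneg_left
            (density_le_hBarDelta S.hγ S.hδ (S.dens_pos hx) S.hρbar hρ)
            (pow_nonneg (S.radius_pos hx).le _)
      _ = _ := by ring
  calc ∫ r in S.a..2, r ^ (N + 1) * S.dens (t, r)
      ≤ ∫ r in S.a..2, (3 / 2 * r ^ (N + 1)
          + growthConst γ * (r ^ (N + 1) * S.relEnergy (t, r))) :=
        intervalIntegral.integral_mono_on S.a_le_two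
          ((by fun_prop : Continuous _).intervalIntegrable _ _)
          ((hpow.const_mul _).add (hrel.const_mul _)) hpoint
    _ = 3 / 2 * (∫ r in S.a..2, r ^ (N + 1))
          + growthConst γ * ∫ r in S.a..2, r ^ (N + 1) * S.relEnergy (t, r) := by
        rw [intervalIntegral.integral_add (hpow.const_mul _) (hrel.const_mul _),
          intervalIntegral.integral_const_mul, intervalIntegral.integral_const_mul]
    _ ≤ massConst N γ E₀ := by
        refine add_le_add (mul_le_mul_of_nonneg_left
          (integral_pow_succ_le S.ha0.le S.a_le_two N) (by norm_num)) ?_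
        exact mul_le_mul_of_nonneg_left (S.slice_relEnergy_two_le hb ht)
          (growthConst_nonneg S.hγ)

end ViscousSetup

/-- The derivative of the truncation `truncate k`. -/
def truncateDeriv (k : ℕ) (x : ℝ) : ℝ := 1 / (1 + x ^ (2 * k))

/-- The second derivative of the truncation `truncate k`. -/
def truncateDeriv₂ (k : ℕ) (x : ℝ) : ℝ := -(2 * k * x ^ (2 * k - 1)) / (1 + x ^ (2 * k)) ^ 2

/-- A smooth bounded truncation, equal to the identity to first order at the origin. -/
def truncate (k : ℕ) (x : ℝ) : ℝ := ∫ s in (0)..x, truncateDeriv k s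

section truncation

variable {k : ℕ}

lemma one_add_even_pow_pos (k : ℕ) (x : ℝ) : 0 < 1 + x ^ (2 * k) := by
  linarith [(even_two_mul k).pow_nonneg x]

@[fun_prop] lemma continuous_truncateDeriv (k : ℕ) : Continuous (truncateDeriv k) :=
  Continuous.div (by fun_prop) (by fun_prop) fun x => (one_add_even_pow_pos k x).ne'

@[fun_prop] lemma continuous_truncateDeriv₂ (k : ℕ) : Continuous (truncateDeriv₂ k) :=
  Continuous.div (by fun_prop) (by fun_prop) fun x => pow_ne_zero 2 (one_add_even_pow_pos k x).ne'

lemma hasDerivAt_truncate (k : ℕ) (x : ℝ) : HasDerivAt (truncate k) (truncateDeriv k x) x :=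
  ((continuous_truncateDeriv k).integral_hasStrictDerivAt 0 x).hasDerivAt

@[fun_prop] lemma continuous_truncate (k : ℕ) : Continuous (truncate k) :=
  continuous_iff_continuousAt.2 fun x => (hasDerivAt_truncate k x).continuousAt

lemma hasDerivAt_truncateDeriv (k : ℕ) (x : ℝ) :
    HasDerivAt (truncateDeriv k) (truncateDeriv₂ k x) x := by
  refine ((hasDerivAt_const x (1 : ℝ)).div ((hasDerivAt_pow (2 * k) x).const_add 1)
    (one_add_even_pow_pos k x).ne').congr_deriv ?_
  unfold truncateDeriv₂
  push_cast
  ring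

lemma truncateDeriv_pos (k : ℕ) (x : ℝ) : 0 < truncateDeriv k x :=
  one_div_pos.2 (one_add_even_pow_pos k x)

lemma half_le_truncateDeriv {x : ℝ} (hx : 0 ≤ x) (hx1 : x ≤ 1) : 1 / 2 ≤ truncateDeriv k x :=
  one_div_le_one_div_of_le (one_add_even_pow_pos k x)
    (by linarith [pow_le_one₀ hx hx1 (n := 2 * k)])

lemma truncateDeriv_le_arctan (hk : 1 ≤ k) (x : ℝ) :
    truncateDeriv k x ≤ 2 * (1 / (1 + x ^ 2)) := by
  unfold truncateDeriv
  rw [mul_one_div, div_le_div_iff₀ (one_add_even_pow_pos k x) (by positivity), pow_mul]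
  rcases le_total (x ^ 2) 1 with hsmall | hlarge
  · linarith [pow_nonneg (sq_nonneg x) k]
  · linarith [le_self_pow₀ hlarge (show k ≠ 0 by omega)]

lemma monotone_truncate (k : ℕ) : Monotone (truncate k) :=
  monotone_of_hasDerivAt_nonneg (hasDerivAt_truncate k) fun x => (truncateDeriv_pos k x).le

lemma monotone_arctan_sub_truncate (hk : 1 ≤ k) :
    Monotone fun x => 2 * arctan x - truncate k x :=
  monotone_of_hasDerivAt_nonneg
    (fun x => ((hasDerivAt_arctan x).const_mul 2).sub (hasDerivAt_truncate k x))
    fun x => sub_nonneg.2 (truncateDeriv_le_arctan hk x)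

lemma abs_truncate_sub_le (hk : 1 ≤ k) {x y : ℝ} (hx : 0 < x) (hy : 0 < y) :
    |truncate k x - truncate k y| ≤ 4 := by
  wlog h : y ≤ x generalizing x y with H
  · rw [abs_sub_comm]
    exact H hy hx (le_of_not_ge h)
  have harctan : 2 * arctan y - truncate k y ≤ 2 * arctan x - truncate k x :=
    monotone_arctan_sub_truncate hk h
  rw [abs_of_nonneg (sub_nonneg.2 (monotone_truncate k h))]
  linarith [arctan_lt_pi_div_two x, arctan_pos.2 hy, pi_le_four]

lemma abs_truncateDeriv₂ {x : ℝ} (hx : 0 < x) :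
    |truncateDeriv₂ k x| = 2 * k * (x ^ (2 * k - 1) / (1 + x ^ (2 * k)) ^ 2) := by
  unfold truncateDeriv₂
  rw [neg_div, abs_neg, abs_of_nonneg (by positivity)]
  ring

lemma abs_truncateDeriv₂_le_rpow {γ x : ℝ} (hγ : 1 < γ) (hk : γ ≤ k) (hx : 0 < x) :
    |truncateDeriv₂ k x| ≤ 2 * k * x ^ (γ - 2) := by
  have hk1 : 1 ≤ k := by
    exact_mod_cast (hγ.trans_le hk).le
  have hcast : ((2 * k - 1 : ℕ) : ℝ) = 2 * k - 1 := by
    rw [Nat.cast_sub (by omega)]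
    push_cast
    ring
  rw [abs_truncateDeriv₂ hx]
  refine mul_le_mul_of_nonneg_left ?_ (by positivity)
  rcases le_total x 1 with hsmall | hlarge
  · calc x ^ (2 * k - 1) / (1 + x ^ (2 * k)) ^ 2 ≤ x ^ (2 * k - 1) := by
          refine div_le_self (by positivity) (one_le_pow₀ ?_)
          linarith [pow_pos hx (2 * k)]
      _ = x ^ (2 * k - 1 : ℝ) := by rw [← rpow_natCast, hcast]
      _ ≤ x ^ (γ - 2) := rpow_le_rpow_of_exponent_ge hx hsmall (by linarith)
  · calc x ^ (2 * k - 1) / (1 + x ^ (2 * k)) ^ 2 ≤ x ^ (2 * k - 1) / (x ^ (2 * k)) ^ 2 := by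
          gcongr
          linarith
      _ = x ^ (-(2 * k + 1) : ℝ) := by
          rw [← pow_mul, ← rpow_natCast, ← rpow_natCast, hcast, ← rpow_sub hx]
          congr 1
          push_cast
          ring
      _ ≤ x ^ (γ - 2) := rpow_le_rpow_of_exponent_le hlarge (by linarith)

lemma abs_truncateDeriv₂_le_div (hk : 1 ≤ k) {x : ℝ} (hx : 0 < x) :
    |truncateDeriv₂ k x| ≤ 2 * k * (1 / x) := by
  rw [abs_truncateDeriv₂ hx]
  refine mul_le_mul_of_nonneg_left ?_ (by positivity)
  rw [div_le_div_iff₀ (by positivity) hx, ← pow_succ, Nat.sub_add_cancel (by omega), one_mul]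
  nlinarith [pow_pos hx (2 * k)]

lemma truncateDeriv_sq_mul_le (hk : 1 ≤ k) {x : ℝ} (hx : 0 < x) :
    truncateDeriv k x ^ 2 * x ≤ 1 := by
  have hpow := pow_pos hx (2 * k)
  have hle : x ≤ 1 + x ^ (2 * k) := by
    rcases le_total x 1 with hsmall | hlarge
    · linarith
    · linarith [le_self_pow₀ hlarge (show 2 * k ≠ 0 by omega)]
  unfold truncateDeriv
  rw [div_pow, one_pow, one_div_mul_eq_div]
  refine div_le_one_of_le₀ ?_ (by positivity)
  nlinarith

end truncation

lemma truncated_source_le {ε k c β₂ ρ q m z : ℝ} (hε : 1 ≤ ε) (hz : |β₂| ≤ 2 * k * z)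
    (hρ : |β₂| ≤ 2 * k * (1 / ρ)) (hc : c = -(ε * β₂ * q ^ 2) + β₂ * q * m) :
    |c| ≤ 4 * k * ε * (z * q ^ 2) + 2 * k * (m ^ 2 / ρ) := by
  have hq : q ^ 2 ≤ ε * q ^ 2 := le_mul_of_one_le_left (sq_nonneg q) hε
  have hquad : |-(ε * q ^ 2) + q * m| ≤ 2 * ε * q ^ 2 + m ^ 2 := by
    rw [abs_le]
    constructor <;> nlinarith [sq_nonneg (q - m), sq_nonneg (q + m), sq_nonneg q, sq_nonneg m]
  calc |c| = |β₂| * |-(ε * q ^ 2) + q * m| := by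
        rw [← abs_mul, hc]
        ring_nf
    _ ≤ |β₂| * (2 * ε * q ^ 2 + m ^ 2) := mul_le_mul_of_nonneg_left hquad (abs_nonneg _)
    _ = |β₂| * (2 * ε * q ^ 2) + |β₂| * m ^ 2 := mul_add ..
    _ ≤ 2 * k * z * (2 * ε * q ^ 2) + 2 * k * (1 / ρ) * m ^ 2 :=
        add_le_add (mul_le_mul_of_nonneg_right hz (by positivity))
          (mul_le_mul_of_nonneg_right hρ (sq_nonneg m))
    _ = _ := by ring

/-- The bound for the weighted `L¹` norm of the source in the equation for the truncated
density. -/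
def sourceConst (γ T E₀ : ℝ) : ℝ :=
  4 * ⌈γ⌉₊ * (4 / (γ - 1) ^ 2 * E₀) + 2 * ⌈γ⌉₊ * (T * (2 * E₀))

/-- The constant in the gradient estimate for the truncated density. -/
def largeConst (N : ℕ) (γ T E₀ : ℝ) : ℝ :=
  (2 * (N + 3) + (2 ^ (N + 2)) ^ 2) * (8 * (N + 4)) * (8 * π * 4 ^ 2
    + 4 * (N + 4) * (N + 5) * (T * (2 * E₀)) + 4 * (1 + (N + 3) * (4 * π)) * sourceConst γ T E₀)

namespace ViscousSetup

variable {N : ℕ} {γ T E₀ : ℝ} (S : ViscousSetup (N + 2) γ T E₀)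

lemma one_le_ceil (S : ViscousSetup (N + 2) γ T E₀) : 1 ≤ ⌈γ⌉₊ :=
  Nat.one_le_iff_ne_zero.2 (Nat.ceil_pos.2 (by linarith [S.hγ])).ne'

lemma integral_kinetic_le :
    ∫ x in rect T S.a S.b, x.2 ^ (N + 1) * (S.mom x ^ 2 / S.dens x) ≤ T * (2 * E₀) :=
  integral_rect_le_mul_of_slice_le (f := fun x => x.2 ^ (N + 1) * (S.mom x ^ 2 / S.dens x))
    (by fun_prop) S.hT.le S.a_lt_b.le fun _ ht => S.slice_kinetic_le ht

/-- The truncated density as a solution of a radial diffusion equation, obtained by multiplying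
the continuity equation by the derivative of the truncation. -/
def truncatedDiffusion : RadialDiffusion N S.ε T S.a S.b where
  W x := truncate ⌈γ⌉₊ (S.dens x) - truncate ⌈γ⌉₊ S.ρbar
  Wt x := truncateDeriv ⌈γ⌉₊ (S.dens x) * S.densT x
  Wr x := truncateDeriv ⌈γ⌉₊ (S.dens x) * S.densR x
  G x := truncateDeriv ⌈γ⌉₊ (S.dens x) * (S.ε * S.densR x - S.mom x)
  Gr x := truncateDeriv₂ ⌈γ⌉₊ (S.dens x) * S.densR x * (S.ε * S.densR x - S.mom x)
    + truncateDeriv ⌈γ⌉₊ (S.dens x) * (S.ε * S.densRR x - S.momR x)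
  σ x := -(S.ε * truncateDeriv₂ ⌈γ⌉₊ (S.dens x) * S.densR x ^ 2)
    + truncateDeriv₂ ⌈γ⌉₊ (S.dens x) * S.densR x * S.mom x
  hT := S.hT.le
  ha := S.ha0
  hab := S.a_lt_b.le
  continuous_W := by fun_prop
  continuous_Wt := by fun_prop
  continuous_Wr := by fun_prop
  continuous_G := by fun_prop
  continuous_Gr := by fun_prop
  continuous_σ := by fun_prop
  hasDerivAt_W_fst t r :=
    ((hasDerivAt_truncate _ _).comp t (S.hasDerivAt_dens_fst t r)).sub_const _
  hasDerivAt_W_snd t r :=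
    ((hasDerivAt_truncate _ _).comp r (S.hasDerivAt_dens_snd t r)).sub_const _
  hasDerivAt_G_snd t r :=
    ((hasDerivAt_truncateDeriv _ _).comp r (S.hasDerivAt_dens_snd t r)).mul
      (((S.hasDerivAt_densR_snd t r).const_mul S.ε).sub (S.hasDerivAt_mom_snd t r))
  equation x hx := by
    linear_combination truncateDeriv ⌈γ⌉₊ (S.dens x) * S.continuity hx
  G_left t ht := by
    simp only [S.densR_left ht, S.mom_left ht, mul_zero, sub_zero]
  W_right t ht := by rw [S.dens_right ht, sub_self]

lemma abs_truncatedDiffusion_W_le {x : ℝ × ℝ} (hx : x ∈ rect T S.a S.b) :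
    |S.truncatedDiffusion.W x| ≤ 4 :=
  abs_truncate_sub_le S.one_le_ceil (S.dens_pos hx) S.hρbar

lemma integral_truncatedDiffusion_flux_le :
    ∫ x in rect T S.a S.b, x.2 ^ (N + 1)
      * (S.ε * S.truncatedDiffusion.Wr x - S.truncatedDiffusion.G x) ^ 2 ≤ T * (2 * E₀) := by
  refine (integral_rect_mono (by fun_prop) (by fun_prop) fun x hx => ?_).trans
    S.integral_kinetic_le
  refine mul_le_mul_of_nonneg_left ?_ (pow_nonneg (S.radius_pos hx).le _)
  rw [le_div_iff₀ (S.dens_pos hx)]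
  calc _ = truncateDeriv ⌈γ⌉₊ (S.dens x) ^ 2 * S.dens x * S.mom x ^ 2 := by
        simp only [truncatedDiffusion]
        ring
    _ ≤ S.mom x ^ 2 :=
        mul_le_of_le_one_left (sq_nonneg _)
          (truncateDeriv_sq_mul_le S.one_le_ceil (S.dens_pos hx))

lemma integral_truncatedDiffusion_source_le (hε : 1 ≤ S.ε) :
    ∫ x in rect T S.a S.b, x.2 ^ (N + 1) * |S.truncatedDiffusion.σ x| ≤ sourceConst γ T E₀ := by
  have hpoint : ∀ x ∈ rect T S.a S.b, x.2 ^ (N + 1) * |S.truncatedDiffusion.σ x|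
      ≤ 4 * ⌈γ⌉₊ * S.ε * (x.2 ^ (N + 1) * (S.dens x ^ (γ - 2) * S.densR x ^ 2))
        + 2 * ⌈γ⌉₊ * (x.2 ^ (N + 1) * (S.mom x ^ 2 / S.dens x)) := fun x hx => by
    have hσ := truncated_source_le hε
      (abs_truncateDeriv₂_le_rpow S.hγ (Nat.le_ceil γ) (S.dens_pos hx))
      (abs_truncateDeriv₂_le_div S.one_le_ceil (S.dens_pos hx)) rfl (q := S.densR x)
      (m := S.mom x)
    refine (mul_le_mul_of_nonneg_left hσ (pow_nonneg (S.radius_pos hx).le _)).trans_eq ?_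
    ring
  calc _ ≤ ∫ x in rect T S.a S.b,
          (4 * ⌈γ⌉₊ * S.ε * (x.2 ^ (N + 1) * (S.dens x ^ (γ - 2) * S.densR x ^ 2))
            + 2 * ⌈γ⌉₊ * (x.2 ^ (N + 1) * (S.mom x ^ 2 / S.dens x))) :=
        integral_rect_mono (by fun_prop) (by fun_prop) hpoint
    _ = 4 * ⌈γ⌉₊ * (S.ε * ∫ x in rect T S.a S.b,
          x.2 ^ (N + 1) * (S.dens x ^ (γ - 2) * S.densR x ^ 2))
        + 2 * ⌈γ⌉₊ * ∫ x in rect T S.a S.b, x.2 ^ (N + 1) * (S.mom x ^ 2 / S.dens x) := by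
        rw [integral_rect_add (by fun_prop) (by fun_prop), integral_const_mul,
          integral_const_mul, mul_assoc]
    _ ≤ sourceConst γ T E₀ :=
        add_le_add (mul_le_mul_of_nonneg_left S.integral_densR_sq_le (by positivity))
          (mul_le_mul_of_nonneg_left S.integral_kinetic_le (by positivity))

lemma integral_truncateDeriv_mul_densR_sq_le (hb : 2 ≤ S.b) (hε : 1 ≤ S.ε) :
    S.ε * ∫ x in rect T S.a 2,
        x.2 ^ (N + 1) * (truncateDeriv ⌈γ⌉₊ (S.dens x) * S.densR x) ^ 2
      ≤ largeConst N γ T E₀ := by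
  have hflux : 4 * (N + 4) * (N + 5) / S.ε * (T * (2 * E₀))
      ≤ 4 * (N + 4) * (N + 5) * (T * (2 * E₀)) :=
    mul_le_mul_of_nonneg_right (div_le_self (by positivity) hε)
      (mul_nonneg S.hT.le (mul_nonneg zero_le_two S.E₀_nonneg))
  refine (S.truncatedDiffusion.integral_Wr_sq_le S.hε S.ha1.le hb
    (fun x hx => S.abs_truncatedDiffusion_W_le hx) S.integral_truncatedDiffusion_flux_le
    (S.integral_truncatedDiffusion_source_le hε)).trans ?_
  unfold largeConst
  gcongr

end ViscousSetup

/-- A convex function of linear growth whose second derivative is at least one on `[0, Δ]`. -/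
def lowPotential (Δ x : ℝ) : ℝ := 4 * Δ * (x ^ 2 / (Δ + x))

/-- The derivative of `lowPotential`. -/
def lowPotentialDeriv (Δ x : ℝ) : ℝ := 4 * Δ * ((x ^ 2 + 2 * Δ * x) / (Δ + x) ^ 2)

/-- The second derivative of `lowPotential`. -/
def lowPotentialDeriv₂ (Δ x : ℝ) : ℝ := 8 * Δ ^ 3 / (Δ + x) ^ 3

/-- The primitive of `x * lowPotentialDeriv₂ Δ x` vanishing at the origin. -/
def lowFlux (Δ x : ℝ) : ℝ := 4 * Δ ^ 2 * (x ^ 2 / (Δ + x) ^ 2)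

section lowPotential

variable {Δ x : ℝ}

lemma hasDerivAt_lowPotential (hΔ : 0 < Δ) (hx : 0 < x) :
    HasDerivAt (lowPotential Δ) (lowPotentialDeriv Δ x) x := by
  have h : Δ + x ≠ 0 := (add_pos hΔ hx).ne'
  refine (((hasDerivAt_pow 2 x).div ((hasDerivAt_id' x).const_add Δ) h).const_mul
    (4 * Δ)).congr_deriv ?_
  unfold lowPotentialDeriv
  push_cast
  ring

lemma hasDerivAt_lowPotentialDeriv (hΔ : 0 < Δ) (hx : 0 < x) :
    HasDerivAt (lowPotentialDeriv Δ) (lowPotentialDeriv₂ Δ x) x := by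
  have h : Δ + x ≠ 0 := (add_pos hΔ hx).ne'
  refine ((((hasDerivAt_pow 2 x).add ((hasDerivAt_id' x).const_mul (2 * Δ))).div
    (((hasDerivAt_id' x).const_add Δ).pow 2) (pow_ne_zero 2 h)).const_mul (4 * Δ)).congr_deriv ?_
  unfold lowPotentialDeriv₂
  simp only [Pi.pow_apply, Pi.add_apply]
  push_cast
  field_simp
  ring

lemma hasDerivAt_lowFlux (hΔ : 0 < Δ) (hx : 0 < x) :
    HasDerivAt (lowFlux Δ) (x * lowPotentialDeriv₂ Δ x) x := by
  have h : Δ + x ≠ 0 := (add_pos hΔ hx).ne'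
  refine (((hasDerivAt_pow 2 x).div (((hasDerivAt_id' x).const_add Δ).pow 2)
    (pow_ne_zero 2 h)).const_mul (4 * Δ ^ 2)).congr_deriv ?_
  unfold lowPotentialDeriv₂
  simp only [Pi.pow_apply]
  push_cast
  field_simp
  ring

lemma lowPotential_nonneg (hΔ : 0 < Δ) (hx : 0 < x) : 0 ≤ lowPotential Δ x := by
  unfold lowPotential
  positivity

lemma lowPotential_le (hΔ : 0 < Δ) (hx : 0 < x) : lowPotential Δ x ≤ 4 * Δ * x := by
  unfold lowPotential
  refine mul_le_mul_of_nonneg_left ?_ (by positivity)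
  rw [div_le_iff₀ (by positivity)]
  linarith [mul_pos hΔ hx]

lemma lowPotentialDeriv_nonneg (hΔ : 0 < Δ) (hx : 0 < x) : 0 ≤ lowPotentialDeriv Δ x := by
  unfold lowPotentialDeriv
  positivity

lemma lowPotentialDeriv_le (hΔ : 0 < Δ) (hx : 0 < x) : lowPotentialDeriv Δ x ≤ 4 * Δ := by
  unfold lowPotentialDeriv
  refine mul_le_of_le_one_right (by positivity) ?_
  rw [div_le_one (by positivity)]
  linarith [sq_nonneg Δ]

lemma lowPotentialDeriv₂_nonneg (hΔ : 0 < Δ) (hx : 0 < x) : 0 ≤ lowPotentialDeriv₂ Δ x := by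
  unfold lowPotentialDeriv₂
  positivity

lemma one_le_lowPotentialDeriv₂ (hΔ : 0 < Δ) (hx : 0 < x) (h : x ≤ Δ) :
    1 ≤ lowPotentialDeriv₂ Δ x := by
  unfold lowPotentialDeriv₂
  rw [le_div_iff₀ (by positivity), one_mul]
  calc (Δ + x) ^ 3 ≤ (Δ + Δ) ^ 3 := by gcongr
    _ = _ := by ring

lemma lowFlux_nonneg (hΔ : 0 < Δ) (hx : 0 < x) : 0 ≤ lowFlux Δ x := by
  unfold lowFlux
  positivity

lemma lowFlux_le (hΔ : 0 < Δ) (hx : 0 < x) : lowFlux Δ x ≤ 4 * Δ * x := by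
  unfold lowFlux
  rw [← mul_div_assoc, div_le_iff₀ (by positivity)]
  have : 0 < Δ ^ 3 * x + Δ * x ^ 3 + Δ ^ 2 * x ^ 2 := by positivity
  linarith

lemma lowFlux_sq_div_le (hΔ : 0 < Δ) (hx : 0 < x) : lowFlux Δ x ^ 2 / x ≤ 16 * Δ ^ 3 := by
  have hbounded : lowFlux Δ x ≤ 4 * Δ ^ 2 := by
    unfold lowFlux
    refine mul_le_of_le_one_right (by positivity) ?_
    rw [div_le_one (by positivity)]
    gcongr
    linarith
  rw [div_le_iff₀ hx]
  calc lowFlux Δ x ^ 2 = lowFlux Δ x * lowFlux Δ x := sq _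
    _ ≤ 4 * Δ ^ 2 * (4 * Δ * x) :=
      mul_le_mul hbounded (lowFlux_le hΔ hx) (lowFlux_nonneg hΔ hx) (by positivity)
    _ = _ := by ring

end lowPotential

lemma mul_abs_le_weighted_sq {s ρ : ℝ} (hs : 0 < s) (hρ : 0 < ρ) (x y : ℝ) :
    x * |y| ≤ s / 2 * (x ^ 2 / ρ) + s⁻¹ / 2 * (ρ * y ^ 2) := by
  have hsq : 0 ≤ (s * x - ρ * |y|) ^ 2 / (2 * s * ρ) := by positivity
  have hexpand : (s * x - ρ * |y|) ^ 2 / (2 * s * ρ)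
      = s / 2 * (x ^ 2 / ρ) + s⁻¹ / 2 * (ρ * y ^ 2) - x * |y| := by
    rw [sub_sq, mul_pow ρ, sq_abs]
    field_simp
    ring
  linarith

lemma abs_le_half_add_sq_div {ρ : ℝ} (hρ : 0 < ρ) (y : ℝ) : |y| ≤ 1 / 2 * (ρ + y ^ 2 / ρ) := by
  have h := mul_abs_le_weighted_sq one_pos hρ |y| 1
  rw [sq_abs] at h
  norm_num at h
  linarith

/-- A nonnegative function `η` on `[0,∞)`, constant near the origin and vanishing on
`[2,∞)`, with its first two derivatives and a common bound `K` for all three on `(0, 2]`. It stands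
for the square of the cutoff function in the theorem. -/
structure Cutoff (K : ℝ) where
  η : ℝ → ℝ
  η₁ : ℝ → ℝ
  η₂ : ℝ → ℝ
  continuous_η₂ : Continuous η₂
  hasDerivAt_η : ∀ r, HasDerivAt η (η₁ r) r
  hasDerivAt_η₁ : ∀ r, HasDerivAt η₁ (η₂ r) r
  nonneg : ∀ r, 0 ≤ η r
  η_le : ∀ r ∈ Ioc (0 : ℝ) 2, η r ≤ K
  abs_η₁_le : ∀ r ∈ Ioc (0 : ℝ) 2, |η₁ r| ≤ K
  abs_η₂_le : ∀ r ∈ Ioc (0 : ℝ) 2, |η₂ r| ≤ K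
  η₁_eq_zero : ∀ r ∈ Ioo (0 : ℝ) 1, η₁ r = 0
  η₂_eq_zero : ∀ r ∈ Ioo (0 : ℝ) 1, η₂ r = 0
  η_eq_zero : ∀ r, 2 ≤ r → η r = 0
  η₁_two : η₁ 2 = 0

namespace Cutoff

attribute [fun_prop] continuous_η₂

variable {K : ℝ} (c : Cutoff K)

@[fun_prop] lemma continuous_η : Continuous c.η :=
  continuous_iff_continuousAt.2 fun r => (c.hasDerivAt_η r).continuousAt

@[fun_prop] lemma continuous_η₁ : Continuous c.η₁ :=
  continuous_iff_continuousAt.2 fun r => (c.hasDerivAt_η₁ r).continuousAt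

/-- The derivative of `r ^ (N + 1) * η r`. -/
def weightDeriv (N : ℕ) (r : ℝ) : ℝ := (N + 1) * r ^ N * c.η r + r ^ (N + 1) * c.η₁ r

/-- The derivative of `r ^ (N + 1) * η₁ r`. -/
def slopeDeriv (N : ℕ) (r : ℝ) : ℝ := (N + 1) * r ^ N * c.η₁ r + r ^ (N + 1) * c.η₂ r

@[fun_prop] lemma continuous_weightDeriv (N : ℕ) : Continuous (c.weightDeriv N) := by
  unfold weightDeriv
  fun_prop

@[fun_prop] lemma continuous_slopeDeriv (N : ℕ) : Continuous (c.slopeDeriv N) := by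
  unfold slopeDeriv
  fun_prop

lemma hasDerivAt_weight (N : ℕ) (r : ℝ) :
    HasDerivAt (fun y => y ^ (N + 1) * c.η y) (c.weightDeriv N r) r :=
  (hasDerivAt_pow_succ N r).mul (c.hasDerivAt_η r)

lemma hasDerivAt_slope (N : ℕ) (r : ℝ) :
    HasDerivAt (fun y => y ^ (N + 1) * c.η₁ y) (c.slopeDeriv N r) r :=
  (hasDerivAt_pow_succ N r).mul (c.hasDerivAt_η₁ r)

lemma bound_nonneg (c : Cutoff K) : 0 ≤ K := (c.nonneg 1).trans (c.η_le 1 (by norm_num))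

lemma slopeDeriv_le (N : ℕ) {r : ℝ} (hr : r ∈ Ioc (0 : ℝ) 2) :
    c.slopeDeriv N r ≤ K * (N + 2) * r ^ (N + 1) := by
  have hK := c.bound_nonneg
  have hr0 := hr.1
  unfold slopeDeriv
  rcases lt_or_ge r 1 with hlt | hge
  · rw [c.η₁_eq_zero r ⟨hr0, hlt⟩, c.η₂_eq_zero r ⟨hr0, hlt⟩, mul_zero, mul_zero, add_zero]
    positivity
  · have hpow : r ^ N ≤ r ^ (N + 1) := pow_le_pow_right₀ hge (Nat.le_succ N)
    calc (N + 1) * r ^ N * c.η₁ r + r ^ (N + 1) * c.η₂ r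
        ≤ (N + 1) * r ^ N * K + r ^ (N + 1) * K := by
          gcongr
          · exact (abs_le.1 (c.abs_η₁_le r hr)).2
          · exact (abs_le.1 (c.abs_η₂_le r hr)).2
      _ ≤ (N + 1) * r ^ (N + 1) * K + r ^ (N + 1) * K := by gcongr
      _ = _ := by ring

lemma abs_weightDeriv_le (N : ℕ) {a r : ℝ} (ha : 0 < a) (ha1 : a ≤ 1) (hr : r ∈ Icc a 2) :
    |c.weightDeriv N r| ≤ K * (N + 2) * r ^ (N + 1) / a := by
  have hK := c.bound_nonneg
  have hr0 : 0 < r := ha.trans_le hr.1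
  have hpow : r ^ N ≤ r ^ (N + 1) / a := by
    rw [le_div_iff₀ ha, pow_succ]
    exact mul_le_mul_of_nonneg_left hr.1 (by positivity)
  have hpow_succ : r ^ (N + 1) ≤ r ^ (N + 1) / a := le_div_self (by positivity) ha ha1
  unfold weightDeriv
  calc _ ≤ |(N + 1) * r ^ N * c.η r| + |r ^ (N + 1) * c.η₁ r| := abs_add_le _ _
    _ = (N + 1) * r ^ N * c.η r + r ^ (N + 1) * |c.η₁ r| := by
      rw [abs_mul (r ^ (N + 1)), abs_of_pos (pow_pos hr0 _), abs_of_nonneg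
        (mul_nonneg (by positivity) (c.nonneg r))]
    _ ≤ (N + 1) * r ^ N * K + r ^ (N + 1) * K := by
      gcongr
      · exact c.η_le r ⟨hr0, hr.2⟩
      · exact c.abs_η₁_le r ⟨hr0, hr.2⟩
    _ ≤ (N + 1) * (r ^ (N + 1) / a) * K + r ^ (N + 1) / a * K := by gcongr
    _ = _ := by ring

end Cutoff

lemma exists_cutoff_eq_sq {ω : ℝ → ℝ} (hω : ContDiff ℝ 2 ω)
    (hω_one : ∀ r ∈ Icc (0 : ℝ) 1, ω r = 1) (hω_zero : ∀ r, 2 ≤ r → ω r = 0) :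
    ∃ (K : ℝ) (c : Cutoff K), ∀ r, c.η r = ω r ^ 2 := by
  let η : ℝ → ℝ := fun r => ω r ^ 2
  have hη_smooth : ContDiff ℝ (1 + 1) η := (hω.pow 2).of_le one_add_one_eq_two.le
  have hη₁_smooth : ContDiff ℝ 1 (deriv η) := (contDiff_succ_iff_deriv.1 hη_smooth).2.2
  have hη₂ : Continuous (deriv (deriv η)) := hη₁_smooth.continuous_deriv le_rfl
  have hη_one : EqOn η (fun _ => 1) (Ioo 0 1) := fun r hr => by
    simp [η, hω_one r (Ioo_subset_Icc_self hr)]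
  have hη₁_zero : EqOn (deriv η) (fun _ => 0) (Ioo 0 1) := by
    simpa only [deriv_const'] using hη_one.deriv isOpen_Ioo
  have hη₂_zero : EqOn (deriv (deriv η)) (fun _ => 0) (Ioo 0 1) := by
    simpa only [deriv_const'] using hη₁_zero.deriv isOpen_Ioo
  have hη₁_two : deriv η 2 = 0 := by
    have h := ((hω.differentiable (by simp) 2).hasDerivAt.pow 2).deriv
    rw [hω_zero 2 le_rfl] at h
    exact h.trans (by simp)
  obtain ⟨K, hK⟩ := (isCompact_Icc (a := (0 : ℝ)) (b := 2)).exists_bound_of_continuousOn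
    (f := fun r => (η r, deriv η r, deriv (deriv η) r))
    (hη_smooth.continuous.prodMk (hη₁_smooth.continuous.prodMk hη₂)).continuousOn
  have hbound : ∀ r ∈ Ioc (0 : ℝ) 2,
      |η r| ≤ K ∧ |deriv η r| ≤ K ∧ |deriv (deriv η) r| ≤ K := fun r hr => by
    simpa only [Prod.norm_def, sup_le_iff, norm_eq_abs] using hK r (Ioc_subset_Icc_self hr)
  exact ⟨K,
    { η := η
      η₁ := deriv η
      η₂ := deriv (deriv η)
      continuous_η₂ := hη₂
      hasDerivAt_η := fun r => (hη_smooth.differentiable (by simp) r).hasDerivAt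
      hasDerivAt_η₁ := fun r => (hη₁_smooth.differentiable (by simp) r).hasDerivAt
      nonneg := fun r => sq_nonneg _
      η_le := fun r hr => (le_abs_self _).trans (hbound r hr).1
      abs_η₁_le := fun r hr => (hbound r hr).2.1
      abs_η₂_le := fun r hr => (hbound r hr).2.2
      η₁_eq_zero := hη₁_zero
      η₂_eq_zero := hη₂_zero
      η_eq_zero := fun r hr => by simp [η, hω_zero r hr]
      η₁_two := hη₁_two }, fun _ => rfl⟩

/-- The coefficient of `Δ / a` in the low density estimate. -/
def geometricConst (N : ℕ) (γ T E₀ K : ℝ) : ℝ :=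
  4 * K * massConst N γ E₀ + 8 * K * (N + 2) * (T * massConst N γ E₀)
    + 8 * K * (N + 2) * (T * (2 * E₀))

/-- The coefficient of `Δ ^ (3 / 2) / √ε` in the low density estimate. -/
def shearConst (N : ℕ) (T E₀ K : ℝ) : ℝ := 8 * K * (T * 2 ^ (N + 2)) + K / 2 * E₀

/-- The constant of the low density gradient estimate. -/
def boundConst (N : ℕ) (γ T E₀ K : ℝ) : ℝ :=
  1 + |4 * K * largeConst N γ T E₀| + |geometricConst N γ T E₀ K| + |shearConst N T E₀ K|

lemma boundConst_pos (N : ℕ) (γ T E₀ K : ℝ) : 0 < boundConst N γ T E₀ K := by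
  unfold boundConst
  positivity

namespace ViscousSetup

variable {N : ℕ} {γ T E₀ : ℝ} (S : ViscousSetup (N + 2) γ T E₀) {K Δ : ℝ} (c : Cutoff K)

/-- The terms of the localized balance law for `lowPotential` that carry no sign. -/
def lowRemainder (Δ : ℝ) (x : ℝ × ℝ) : ℝ :=
  S.ε * (lowPotential Δ (S.dens x) * c.slopeDeriv N x.2)
    + x.2 ^ (N + 1) * S.mom x * lowPotentialDeriv Δ (S.dens x) * c.η₁ x.2
    - lowFlux Δ (S.dens x) * (S.mom x / S.dens x * c.weightDeriv N x.2)
    - lowFlux Δ (S.dens x) * (S.velR x * (x.2 ^ (N + 1) * c.η x.2))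

/-- The dissipation in the localized balance law for `lowPotential`. -/
def lowDissipation (Δ : ℝ) (x : ℝ × ℝ) : ℝ :=
  x.2 ^ (N + 1) * (lowPotentialDeriv₂ Δ (S.dens x) * S.densR x ^ 2 * c.η x.2)

/-- The localized density `r ^ (N + 1) φ(ρ) η` of the potential `φ = lowPotential Δ`. -/
def lowEnergy (Δ : ℝ) (x : ℝ × ℝ) : ℝ :=
  lowPotential Δ (S.dens x) * (x.2 ^ (N + 1) * c.η x.2)

/-- The time derivative of `lowEnergy`. -/
def lowEnergyT (Δ : ℝ) (x : ℝ × ℝ) : ℝ :=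
  lowPotentialDeriv Δ (S.dens x) * S.densT x * (x.2 ^ (N + 1) * c.η x.2)

/-- The radial flux of `lowEnergy`. -/
def lowEnergyFlux (Δ : ℝ) (x : ℝ × ℝ) : ℝ :=
  lowPotentialDeriv Δ (S.dens x)
      * ((S.mom x - S.ε * S.densR x) * (x.2 ^ (N + 1) * c.η x.2))
    - lowFlux Δ (S.dens x) * (S.mom x / S.dens x * (x.2 ^ (N + 1) * c.η x.2))
    + S.ε * (lowPotential Δ (S.dens x) * (x.2 ^ (N + 1) * c.η₁ x.2))

/-- The radial derivative of `lowEnergyFlux`. -/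
def lowEnergyFluxR (Δ : ℝ) (x : ℝ × ℝ) : ℝ :=
  lowPotentialDeriv₂ Δ (S.dens x) * S.densR x
      * ((S.mom x - S.ε * S.densR x) * (x.2 ^ (N + 1) * c.η x.2))
    + lowPotentialDeriv Δ (S.dens x)
      * ((S.momR x - S.ε * S.densRR x) * (x.2 ^ (N + 1) * c.η x.2)
        + (S.mom x - S.ε * S.densR x) * c.weightDeriv N x.2)
    - (S.dens x * lowPotentialDeriv₂ Δ (S.dens x) * S.densR x
        * (S.mom x / S.dens x * (x.2 ^ (N + 1) * c.η x.2))
      + lowFlux Δ (S.dens x) * (S.velR x * (x.2 ^ (N + 1) * c.η x.2)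
        + S.mom x / S.dens x * c.weightDeriv N x.2))
    + S.ε * (lowPotentialDeriv Δ (S.dens x) * S.densR x * (x.2 ^ (N + 1) * c.η₁ x.2)
      + lowPotential Δ (S.dens x) * c.slopeDeriv N x.2)

lemma continuousOn_comp_dens {f f' : ℝ → ℝ} (hf : ∀ x, 0 < x → HasDerivAt f (f' x) x) :
    ContinuousOn (fun x => f (S.dens x)) (rect T S.a S.b) := fun _ hx =>
  ((hf _ (S.dens_pos hx)).continuousAt.comp S.continuous_dens.continuousAt).continuousWithinAt

@[fun_prop] lemma continuousOn_lowPotential (hΔ : 0 < Δ) :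
    ContinuousOn (fun x => lowPotential Δ (S.dens x)) (rect T S.a S.b) :=
  S.continuousOn_comp_dens fun _ hx => hasDerivAt_lowPotential hΔ hx

@[fun_prop] lemma continuousOn_lowPotentialDeriv (hΔ : 0 < Δ) :
    ContinuousOn (fun x => lowPotentialDeriv Δ (S.dens x)) (rect T S.a S.b) :=
  S.continuousOn_comp_dens fun _ hx => hasDerivAt_lowPotentialDeriv hΔ hx

@[fun_prop] lemma continuousOn_lowFlux (hΔ : 0 < Δ) :
    ContinuousOn (fun x => lowFlux Δ (S.dens x)) (rect T S.a S.b) :=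
  S.continuousOn_comp_dens fun _ hx => hasDerivAt_lowFlux hΔ hx

@[fun_prop] lemma continuousOn_lowPotentialDeriv₂ (hΔ : 0 < Δ) :
    ContinuousOn (fun x => lowPotentialDeriv₂ Δ (S.dens x)) (rect T S.a S.b) :=
  ContinuousOn.div (by fun_prop) (by fun_prop) fun _ hx =>
    pow_ne_zero 3 (add_pos hΔ (S.dens_pos hx)).ne'

@[fun_prop] lemma continuousOn_lowRemainder (hΔ : 0 < Δ) :
    ContinuousOn (S.lowRemainder c Δ) (rect T S.a S.b) := by
  unfold lowRemainder
  fun_prop (disch := assumption)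

@[fun_prop] lemma continuousOn_lowDissipation (hΔ : 0 < Δ) :
    ContinuousOn (S.lowDissipation c Δ) (rect T S.a S.b) := by
  unfold lowDissipation
  fun_prop (disch := assumption)

@[fun_prop] lemma continuousOn_lowEnergy (hΔ : 0 < Δ) :
    ContinuousOn (S.lowEnergy c Δ) (rect T S.a S.b) := by
  unfold lowEnergy
  fun_prop (disch := assumption)

lemma hasDerivAt_lowEnergy (hΔ : 0 < Δ) {t r : ℝ} (hx : (t, r) ∈ rect T S.a S.b) :
    HasDerivAt (fun s => S.lowEnergy c Δ (s, r)) (S.lowEnergyT c Δ (t, r)) t :=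
  ((hasDerivAt_lowPotential hΔ (S.dens_pos hx)).comp t (S.hasDerivAt_dens_fst t r)).mul_const
    (r ^ (N + 1) * c.η r)

lemma hasDerivAt_lowEnergyFlux (hΔ : 0 < Δ) {t r : ℝ} (hx : (t, r) ∈ rect T S.a S.b) :
    HasDerivAt (fun y => S.lowEnergyFlux c Δ (t, y)) (S.lowEnergyFluxR c Δ (t, r)) r := by
  have hρ := S.dens_pos hx
  have hρ_r := S.hasDerivAt_dens_snd t r
  have hflux := (S.hasDerivAt_mom_snd t r).sub ((S.hasDerivAt_densR_snd t r).const_mul S.ε)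
  exact ((((hasDerivAt_lowPotentialDeriv hΔ hρ).comp r hρ_r).mul
    (hflux.mul (c.hasDerivAt_weight N r))).sub
    (((hasDerivAt_lowFlux hΔ hρ).comp r hρ_r).mul
      ((S.hasDerivAt_vel hx).mul (c.hasDerivAt_weight N r)))).add
    ((((hasDerivAt_lowPotential hΔ hρ).comp r hρ_r).mul (c.hasDerivAt_slope N r)).const_mul S.ε)

lemma lowEnergyT_add_lowEnergyFluxR {x : ℝ × ℝ} (hx : x ∈ rect T S.a S.b) :
    S.lowEnergyT c Δ x + S.lowEnergyFluxR c Δ x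
      = S.lowRemainder c Δ x - S.ε * S.lowDissipation c Δ x := by
  have hvel : S.dens x * (S.mom x / S.dens x) = S.mom x := mul_div_cancel₀ _ (S.dens_ne_zero hx)
  unfold lowEnergyT lowEnergyFluxR lowRemainder lowDissipation Cutoff.weightDeriv
  linear_combination lowPotentialDeriv Δ (S.dens x) * c.η x.2 * S.continuity hx
    - lowPotentialDeriv₂ Δ (S.dens x) * S.densR x * x.2 ^ (N + 1) * c.η x.2 * hvel

lemma lowEnergyFlux_right (t : ℝ) : S.lowEnergyFlux c Δ (t, 2) = 0 := by
  simp [lowEnergyFlux, c.η_eq_zero 2 le_rfl, c.η₁_two]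

lemma lowEnergyFlux_left {t : ℝ} (ht : t ∈ Icc 0 T) : S.lowEnergyFlux c Δ (t, S.a) = 0 := by
  simp [lowEnergyFlux, c.η₁_eq_zero S.a ⟨S.ha0, S.ha1⟩, S.densR_left ht, S.mom_left ht]

lemma integral_low_balance (hb : 2 ≤ S.b) (hΔ : 0 < Δ) :
    (∫ x in rect T S.a 2, S.lowRemainder c Δ x) - S.ε * ∫ x in rect T S.a 2, S.lowDissipation c Δ x
      = ∫ r in S.a..2, (S.lowEnergy c Δ (T, r) - S.lowEnergy c Δ (0, r)) := by
  have hsub := S.rect_two_subset hb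
  have hET : ContinuousOn (S.lowEnergyT c Δ) (rect T S.a 2) := by
    unfold lowEnergyT
    exact ContinuousOn.mono (by fun_prop (disch := assumption)) hsub
  have hFR : ContinuousOn (S.lowEnergyFluxR c Δ) (rect T S.a 2) := by
    unfold lowEnergyFluxR
    exact ContinuousOn.mono (by fun_prop (disch := assumption)) hsub
  have hboundary :
      ∫ t in (0)..T, (S.lowEnergyFlux c Δ (t, 2) - S.lowEnergyFlux c Δ (t, S.a)) = 0 := by
    refine (intervalIntegral.integral_congr (g := fun _ => 0) fun t ht => ?_).trans (by simp)
    rw [uIcc_of_le S.hT.le] at ht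
    simp only [S.lowEnergyFlux_right, S.lowEnergyFlux_left c ht, sub_zero]
  calc _ = ∫ x in rect T S.a 2, (S.lowRemainder c Δ x - S.ε * S.lowDissipation c Δ x) := by
        rw [← integral_const_mul]
        exact (integral_sub
          (integrableOn_rect ((S.continuousOn_lowRemainder c hΔ).mono hsub))
          (integrableOn_rect (continuousOn_const.mul
            ((S.continuousOn_lowDissipation c hΔ).mono hsub)))).symm
    _ = ∫ x in rect T S.a 2, (S.lowEnergyT c Δ x + S.lowEnergyFluxR c Δ x) :=
        integral_rect_congr fun x hx => (S.lowEnergyT_add_lowEnergyFluxR c (hsub hx)).symm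
    _ = _ := by
        rw [integral_rect_divergence hET hFR S.hT.le S.a_le_two
          (fun t ht r hr => S.hasDerivAt_lowEnergy c hΔ (hsub (mem_rect ht hr)))
          (fun t ht r hr => S.hasDerivAt_lowEnergyFlux c hΔ (hsub (mem_rect ht hr))),
          hboundary, add_zero]

lemma low_diffusion_le (hb : 2 ≤ S.b) (hε : S.ε ≤ 1) (hΔ : 0 < Δ) {x : ℝ × ℝ}
    (hx : x ∈ rect T S.a 2) :
    S.ε * (lowPotential Δ (S.dens x) * c.slopeDeriv N x.2)
      ≤ 4 * K * (N + 2) * (Δ / S.a) * (x.2 ^ (N + 1) * S.dens x) := by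
  have hρ := S.dens_pos (S.rect_two_subset hb hx)
  have hr := S.radius_pos (S.rect_two_subset hb hx)
  have hφ := lowPotential_nonneg hΔ hρ
  have hbound : 0 ≤ K * (N + 2) * x.2 ^ (N + 1) :=
    mul_nonneg (mul_nonneg c.bound_nonneg (by positivity)) (by positivity)
  calc S.ε * (lowPotential Δ (S.dens x) * c.slopeDeriv N x.2)
      ≤ S.ε * (lowPotential Δ (S.dens x) * (K * (N + 2) * x.2 ^ (N + 1))) :=
        mul_le_mul_of_nonneg_left (mul_le_mul_of_nonneg_left
          (c.slopeDeriv_le N ⟨hr, hx.2.2⟩) hφ) S.hε.le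
    _ ≤ 1 * (4 * Δ * S.dens x * (K * (N + 2) * x.2 ^ (N + 1))) :=
        mul_le_mul hε (mul_le_mul_of_nonneg_right (lowPotential_le hΔ hρ) hbound)
          (mul_nonneg hφ hbound) zero_le_one
    _ ≤ 1 * (4 * (Δ / S.a) * S.dens x * (K * (N + 2) * x.2 ^ (N + 1))) := by
        gcongr
        exact le_div_self hΔ.le S.ha0 S.ha1.le
    _ = _ := by ring

lemma low_transport_le (hb : 2 ≤ S.b) (hΔ : 0 < Δ) {x : ℝ × ℝ} (hx : x ∈ rect T S.a 2) :
    x.2 ^ (N + 1) * S.mom x * lowPotentialDeriv Δ (S.dens x) * c.η₁ x.2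
      ≤ 4 * K * (N + 2) * (Δ / S.a) * (x.2 ^ (N + 1) * |S.mom x|) := by
  have hρ := S.dens_pos (S.rect_two_subset hb hx)
  have hr := S.radius_pos (S.rect_two_subset hb hx)
  have hφ₁ := lowPotentialDeriv_nonneg hΔ hρ
  have hφ₁_le : lowPotentialDeriv Δ (S.dens x) ≤ 4 * (Δ / S.a) :=
    (lowPotentialDeriv_le hΔ hρ).trans
      (mul_le_mul_of_nonneg_left (le_div_self hΔ.le S.ha0 S.ha1.le) zero_le_four)
  have hη₁_le : |c.η₁ x.2| ≤ K * (N + 2) :=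
    (c.abs_η₁_le x.2 ⟨hr, hx.2.2⟩).trans
      (le_mul_of_one_le_right c.bound_nonneg (by linarith [N.cast_nonneg (α := ℝ)]))
  have ha := S.ha0
  calc x.2 ^ (N + 1) * S.mom x * lowPotentialDeriv Δ (S.dens x) * c.η₁ x.2
      ≤ |x.2 ^ (N + 1) * S.mom x * lowPotentialDeriv Δ (S.dens x) * c.η₁ x.2| := le_abs_self _
    _ = x.2 ^ (N + 1) * |S.mom x| * lowPotentialDeriv Δ (S.dens x) * |c.η₁ x.2| := by
        rw [abs_mul, abs_mul, abs_mul, abs_of_pos (pow_pos hr _), abs_of_nonneg hφ₁]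
    _ ≤ x.2 ^ (N + 1) * |S.mom x| * (4 * (Δ / S.a)) * (K * (N + 2)) :=
        mul_le_mul (mul_le_mul_of_nonneg_left hφ₁_le (by positivity)) hη₁_le (abs_nonneg _)
          (by positivity)
    _ = _ := by ring

lemma low_geometric_le (hb : 2 ≤ S.b) (hΔ : 0 < Δ) {x : ℝ × ℝ} (hx : x ∈ rect T S.a 2) :
    -(lowFlux Δ (S.dens x) * (S.mom x / S.dens x * c.weightDeriv N x.2))
      ≤ 4 * K * (N + 2) * (Δ / S.a) * (x.2 ^ (N + 1) * |S.mom x|) := by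
  have hρ := S.dens_pos (S.rect_two_subset hb hx)
  have hψ := lowFlux_nonneg hΔ hρ
  calc -(lowFlux Δ (S.dens x) * (S.mom x / S.dens x * c.weightDeriv N x.2))
      ≤ |lowFlux Δ (S.dens x) * (S.mom x / S.dens x * c.weightDeriv N x.2)| := neg_le_abs _
    _ = lowFlux Δ (S.dens x) * (|S.mom x| / S.dens x * |c.weightDeriv N x.2|) := by
        rw [abs_mul, abs_mul, abs_div, abs_of_nonneg hψ, abs_of_pos hρ]
    _ ≤ 4 * Δ * S.dens x * (|S.mom x| / S.dens x * (K * (N + 2) * x.2 ^ (N + 1) / S.a)) :=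
        mul_le_mul (lowFlux_le hΔ hρ) (mul_le_mul_of_nonneg_left
          (c.abs_weightDeriv_le N S.ha0 S.ha1.le hx.2) (by positivity)) (by positivity)
          (by positivity)
    _ = _ := by field_simp

lemma low_shear_le (hb : 2 ≤ S.b) (hΔ : 0 < Δ) {s : ℝ} (hs : 0 < s) {x : ℝ × ℝ}
    (hx : x ∈ rect T S.a 2) :
    -(lowFlux Δ (S.dens x) * (S.velR x * (x.2 ^ (N + 1) * c.η x.2)))
      ≤ 8 * K * (s * Δ ^ 3) * x.2 ^ (N + 1)
        + K / 2 * s⁻¹ * (x.2 ^ (N + 1) * (S.dens x * S.velR x ^ 2)) := by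
  have hρ := S.dens_pos (S.rect_two_subset hb hx)
  have hr := S.radius_pos (S.rect_two_subset hb hx)
  have hψ := lowFlux_nonneg hΔ hρ
  have hweight : 0 ≤ x.2 ^ (N + 1) * c.η x.2 := mul_nonneg (by positivity) (c.nonneg _)
  calc -(lowFlux Δ (S.dens x) * (S.velR x * (x.2 ^ (N + 1) * c.η x.2)))
      ≤ |lowFlux Δ (S.dens x) * (S.velR x * (x.2 ^ (N + 1) * c.η x.2))| := neg_le_abs _
    _ = lowFlux Δ (S.dens x) * |S.velR x| * (x.2 ^ (N + 1) * c.η x.2) := by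
        rw [abs_mul, abs_mul, abs_of_nonneg hψ, abs_of_nonneg hweight, mul_assoc]
    _ ≤ (s / 2 * (lowFlux Δ (S.dens x) ^ 2 / S.dens x)
          + s⁻¹ / 2 * (S.dens x * S.velR x ^ 2)) * (x.2 ^ (N + 1) * c.η x.2) :=
        mul_le_mul_of_nonneg_right (mul_abs_le_weighted_sq hs hρ _ _) hweight
    _ ≤ (s / 2 * (16 * Δ ^ 3) + s⁻¹ / 2 * (S.dens x * S.velR x ^ 2)) * (x.2 ^ (N + 1) * K) := by
        gcongr
        · exact lowFlux_sq_div_le hΔ hρ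
        · exact c.η_le x.2 ⟨hr, hx.2.2⟩
    _ = _ := by ring

lemma lowRemainder_le (hb : 2 ≤ S.b) (hε : S.ε ≤ 1) (hΔ : 0 < Δ) {s : ℝ} (hs : 0 < s)
    {x : ℝ × ℝ} (hx : x ∈ rect T S.a 2) :
    S.lowRemainder c Δ x
      ≤ 8 * K * (N + 2) * (Δ / S.a) * (x.2 ^ (N + 1) * S.dens x)
        + 8 * K * (N + 2) * (Δ / S.a) * (x.2 ^ (N + 1) * (S.mom x ^ 2 / S.dens x))
        + 8 * K * (s * Δ ^ 3) * x.2 ^ (N + 1)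
        + K / 2 * s⁻¹ * (x.2 ^ (N + 1) * (S.dens x * S.velR x ^ 2)) := by
  have hx' := S.rect_two_subset hb hx
  have hw : 0 ≤ x.2 ^ (N + 1) := pow_nonneg (S.radius_pos hx').le _
  have hcoeff : 0 ≤ 4 * K * (N + 2) * (Δ / S.a) :=
    mul_nonneg (mul_nonneg (mul_nonneg zero_le_four c.bound_nonneg) (by positivity))
      (div_nonneg hΔ.le S.ha0.le)
  have hmom := mul_le_mul_of_nonneg_left (mul_le_mul_of_nonneg_left
    (abs_le_half_add_sq_div (S.dens_pos hx') (S.mom x)) hw) hcoeff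
  have hkinetic := mul_nonneg hcoeff (mul_nonneg hw (S.kinetic_nonneg hx'))
  unfold lowRemainder
  linarith [S.low_diffusion_le c hb hε hΔ hx, S.low_transport_le c hb hΔ hx,
    S.low_geometric_le c hb hΔ hx, S.low_shear_le c hb hΔ hs hx]

lemma integral_dens_le (hb : 2 ≤ S.b) (hρ : S.ρbar ≤ 1) :
    ∫ x in rect T S.a 2, x.2 ^ (N + 1) * S.dens x ≤ T * massConst N γ E₀ :=
  integral_rect_le_mul_of_slice_le (f := fun x => x.2 ^ (N + 1) * S.dens x) (by fun_prop)
    S.hT.le S.a_le_two fun _ ht => S.slice_dens_le hρ hb ht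

lemma integral_weight_le : ∫ x in rect T S.a 2, x.2 ^ (N + 1) ≤ T * 2 ^ (N + 2) :=
  integral_rect_le_mul_of_slice_le (f := fun x => x.2 ^ (N + 1)) (by fun_prop)
    S.hT.le S.a_le_two fun _ _ => integral_pow_succ_le S.ha0.le S.a_le_two N

lemma integral_kinetic_two_le (hb : 2 ≤ S.b) :
    ∫ x in rect T S.a 2, x.2 ^ (N + 1) * (S.mom x ^ 2 / S.dens x) ≤ T * (2 * E₀) :=
  (integral_rect_mono_right (by fun_prop) (fun _ hx =>
    mul_nonneg (pow_nonneg (S.radius_pos hx).le _) (S.kinetic_nonneg hx)) hb).trans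
    S.integral_kinetic_le

lemma integral_velR_sq_two_le (hb : 2 ≤ S.b) :
    ∫ x in rect T S.a 2, x.2 ^ (N + 1) * (S.dens x * S.velR x ^ 2) ≤ E₀ / S.ε := by
  refine (integral_rect_mono_right (by fun_prop) (fun x hx => ?_) hb).trans
    ((le_div_iff₀' S.hε).2 S.integral_velR_sq_le)
  exact mul_nonneg (pow_nonneg (S.radius_pos hx).le _)
    (mul_nonneg (S.dens_pos hx).le (sq_nonneg _))

lemma integral_lowRemainder_le (hb : 2 ≤ S.b) (hρ : S.ρbar ≤ 1) (hε : S.ε ≤ 1) (hΔ : 0 < Δ)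
    {s : ℝ} (hs : 0 < s) :
    ∫ x in rect T S.a 2, S.lowRemainder c Δ x
      ≤ 8 * K * (N + 2) * (Δ / S.a) * (T * massConst N γ E₀)
        + 8 * K * (N + 2) * (Δ / S.a) * (T * (2 * E₀))
        + 8 * K * (s * Δ ^ 3) * (T * 2 ^ (N + 2)) + K / 2 * s⁻¹ * (E₀ / S.ε) := by
  have hsub := S.rect_two_subset hb
  have hK := c.bound_nonneg
  have ha := S.ha0
  have hkinetic : ContinuousOn (fun x => S.mom x ^ 2 / S.dens x) (rect T S.a 2) :=
    S.continuousOn_mom_sq_div.mono hsub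
  have hvelR : ContinuousOn S.velR (rect T S.a 2) := S.continuousOn_velR.mono hsub
  refine (integral_rect_mono ((S.continuousOn_lowRemainder c hΔ).mono hsub) (by fun_prop)
    fun x hx => S.lowRemainder_le c hb hε hΔ hs hx).trans ?_
  rw [integral_rect_add (by fun_prop) (by fun_prop), integral_rect_add (by fun_prop) (by fun_prop),
    integral_rect_add (by fun_prop) (by fun_prop), integral_const_mul, integral_const_mul,
    integral_const_mul, integral_const_mul]
  exact add_le_add (add_le_add (add_le_add
    (mul_le_mul_of_nonneg_left (S.integral_dens_le hb hρ) (by positivity))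
    (mul_le_mul_of_nonneg_left (S.integral_kinetic_two_le hb) (by positivity)))
    (mul_le_mul_of_nonneg_left S.integral_weight_le (by positivity)))
    (mul_le_mul_of_nonneg_left (S.integral_velR_sq_two_le hb) (by positivity))

lemma integral_lowEnergy_sub_le (hb : 2 ≤ S.b) (hρ : S.ρbar ≤ 1) (hΔ : 0 < Δ) :
    ∫ r in S.a..2, (S.lowEnergy c Δ (0, r) - S.lowEnergy c Δ (T, r))
      ≤ 4 * K * (Δ / S.a) * massConst N γ E₀ := by
  have hsub := S.rect_two_subset hb
  have hK := c.bound_nonneg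
  have ha := S.ha0
  have h0 : (0 : ℝ) ∈ Icc 0 T := ⟨le_rfl, S.hT.le⟩
  have hTT : T ∈ Icc 0 T := ⟨S.hT.le, le_rfl⟩
  have hcont := (S.continuousOn_lowEnergy c hΔ).mono hsub
  have hpoint : ∀ r ∈ Icc S.a 2, S.lowEnergy c Δ (0, r) - S.lowEnergy c Δ (T, r)
      ≤ 4 * K * (Δ / S.a) * (r ^ (N + 1) * S.dens (0, r)) := fun r hr => by
    have hr0 : 0 < r := ha.trans_le hr.1
    have hρ0 := S.dens_pos (hsub (mem_rect h0 hr))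
    have hfinal : 0 ≤ S.lowEnergy c Δ (T, r) :=
      mul_nonneg (lowPotential_nonneg hΔ (S.dens_pos (hsub (mem_rect hTT hr))))
        (mul_nonneg (pow_nonneg hr0.le _) (c.nonneg r))
    calc _ ≤ lowPotential Δ (S.dens (0, r)) * (r ^ (N + 1) * c.η r) := sub_le_self _ hfinal
      _ ≤ 4 * (Δ / S.a) * S.dens (0, r) * (r ^ (N + 1) * K) := by
        gcongr
        · exact mul_nonneg (by positivity) (c.nonneg r)
        · refine (lowPotential_le hΔ hρ0).trans ?_
          gcongr
          exact le_div_self hΔ.le ha S.ha1.le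
        · exact c.η_le r ⟨hr0, hr.2⟩
      _ = _ := by ring
  refine (intervalIntegral.integral_mono_on S.a_le_two
    (intervalIntegrable_of_continuousOn_Icc
      ((continuousOn_slice_snd hcont h0).sub (continuousOn_slice_snd hcont hTT)) S.a_le_two)
    (Continuous.intervalIntegrable (by fun_prop) _ _) hpoint).trans ?_
  rw [intervalIntegral.integral_const_mul]
  exact mul_le_mul_of_nonneg_left (S.slice_dens_le hρ hb h0) (by positivity)

lemma integral_lowDissipation_le (hb : 2 ≤ S.b) (hρ : S.ρbar ≤ 1) (hε : S.ε ≤ 1) (hΔ : 0 < Δ) :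
    S.ε * ∫ x in rect T S.a 2, S.lowDissipation c Δ x
      ≤ geometricConst N γ T E₀ K * (Δ / S.a)
        + shearConst N T E₀ K * (Δ ^ ((3 : ℝ) / 2) / √S.ε) := by
  have : 0 < Δ ^ ((3 : ℝ) / 2) := rpow_pos_of_pos hΔ _
  have : 0 < √S.ε := sqrt_pos.2 S.hε
  have hpow_sq : Δ ^ 3 = (Δ ^ ((3 : ℝ) / 2)) ^ 2 := by
    rw [← rpow_natCast (Δ ^ _), ← rpow_mul hΔ.le, ← rpow_natCast Δ]
    norm_num
  -- This weight in Young's inequality balances the two contributions of the shear term.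
  obtain ⟨s, hs⟩ : ∃ s, s = 1 / (Δ ^ ((3 : ℝ) / 2) * √S.ε) := ⟨_, rfl⟩
  have hs_pos : 0 < s := hs ▸ by positivity
  have hs_source : s * Δ ^ 3 = Δ ^ ((3 : ℝ) / 2) / √S.ε := by
    rw [hs, hpow_sq]
    field_simp
  have hs_shear : s⁻¹ * (E₀ / S.ε) = E₀ * (Δ ^ ((3 : ℝ) / 2) / √S.ε) := by
    rw [hs]
    nth_rewrite 2 [← sq_sqrt S.hε.le]
    field_simp
  have hremainder := S.integral_lowRemainder_le c hb hρ hε hΔ hs_pos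
  rw [hs_source, mul_assoc (K / 2), hs_shear] at hremainder
  have hbalance : S.ε * ∫ x in rect T S.a 2, S.lowDissipation c Δ x
      = (∫ x in rect T S.a 2, S.lowRemainder c Δ x)
        + ∫ r in S.a..2, (S.lowEnergy c Δ (0, r) - S.lowEnergy c Δ (T, r)) := by
    have hneg : ∫ r in S.a..2, (S.lowEnergy c Δ (0, r) - S.lowEnergy c Δ (T, r))
        = -∫ r in S.a..2, (S.lowEnergy c Δ (T, r) - S.lowEnergy c Δ (0, r)) := by
      simp only [← intervalIntegral.integral_neg, neg_sub]
    linarith [S.integral_low_balance c hb hΔ]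
  unfold geometricConst shearConst
  linarith [S.integral_lowEnergy_sub_le c hb hρ hΔ]

/-- The localized squared density gradient in the region `ρ < Δ`, with the radial weight. -/
def lowGradient (Δ : ℝ) (x : ℝ × ℝ) : ℝ :=
  (if S.dens x < Δ then S.densR x ^ 2 else 0) * c.η x.2 * x.2 ^ (N + 1)

lemma lowGradient_le {C : ℝ} {x : ℝ × ℝ} (hC : 0 ≤ C) (hx : 0 ≤ x.2)
    (h : S.dens x < Δ → S.densR x ^ 2 ≤ C) :
    S.lowGradient c Δ x ≤ C * c.η x.2 * x.2 ^ (N + 1) := by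
  unfold lowGradient
  refine mul_le_mul_of_nonneg_right (mul_le_mul_of_nonneg_right ?_ (c.nonneg _)) (by positivity)
  split_ifs with hlt
  exacts [h hlt, hC]

lemma integral_lowGradient_le (hb : 2 ≤ S.b) {g : ℝ × ℝ → ℝ} (hg : ContinuousOn g (rect T S.a 2))
    (h : ∀ x ∈ rect T S.a 2, S.lowGradient c Δ x ≤ g x) :
    ∫ t in Ioo 0 T, ∫ r in Ioo S.a S.b, S.lowGradient c Δ (t, r) ≤ ∫ x in rect T S.a 2, g x := by
  refine integral_Ioo_le_integral_rect hg S.hT.le S.a_le_two hb (fun x hx => ?_)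
    (fun x hx => ?_) h
  · refine mul_nonneg (mul_nonneg ?_ (c.nonneg _)) (pow_nonneg (S.ha0.le.trans hx) _)
    split_ifs <;> positivity
  · rw [lowGradient, c.η_eq_zero x.2 hx, mul_zero, zero_mul]

lemma integral_lowGradient_le_of_one_le (hb : 2 ≤ S.b) (hε : 1 ≤ S.ε) (hΔ : Δ ≤ 1) :
    S.ε * ∫ t in Ioo 0 T, ∫ r in Ioo S.a S.b, S.lowGradient c Δ (t, r)
      ≤ 4 * K * largeConst N γ T E₀ := by
  have hpoint : ∀ x ∈ rect T S.a 2, S.lowGradient c Δ x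
      ≤ 4 * K * (x.2 ^ (N + 1) * (truncateDeriv ⌈γ⌉₊ (S.dens x) * S.densR x) ^ 2) := by
    intro x hx
    have hr := S.radius_pos (S.rect_two_subset hb hx)
    refine (S.lowGradient_le c (C := 4 * (truncateDeriv ⌈γ⌉₊ (S.dens x) * S.densR x) ^ 2)
      (by positivity) hr.le fun hlt => ?_).trans ?_
    · have hhalf := half_le_truncateDeriv (k := ⌈γ⌉₊) (S.dens_pos (S.rect_two_subset hb hx)).le
        (hlt.le.trans hΔ)
      have hone : 1 ≤ (2 * truncateDeriv ⌈γ⌉₊ (S.dens x)) ^ 2 := one_le_pow₀ (by linarith)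
      linarith [mul_le_mul_of_nonneg_right hone (sq_nonneg (S.densR x))]
    · have := mul_le_mul_of_nonneg_left (c.η_le x.2 ⟨hr, hx.2.2⟩) (by positivity :
        0 ≤ 4 * x.2 ^ (N + 1) * (truncateDeriv ⌈γ⌉₊ (S.dens x) * S.densR x) ^ 2)
      linarith
  calc _ ≤ S.ε * ∫ x in rect T S.a 2,
          4 * K * (x.2 ^ (N + 1) * (truncateDeriv ⌈γ⌉₊ (S.dens x) * S.densR x) ^ 2) :=
        mul_le_mul_of_nonneg_left (S.integral_lowGradient_le c hb (by fun_prop) hpoint) S.hε.le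
    _ = 4 * K * (S.ε * ∫ x in rect T S.a 2,
          x.2 ^ (N + 1) * (truncateDeriv ⌈γ⌉₊ (S.dens x) * S.densR x) ^ 2) := by
        rw [integral_const_mul, mul_left_comm]
    _ ≤ _ := mul_le_mul_of_nonneg_left (S.integral_truncateDeriv_mul_densR_sq_le hb hε)
        (mul_nonneg zero_le_four c.bound_nonneg)

lemma integral_lowGradient_le_of_le_one (hb : 2 ≤ S.b) (hρ : S.ρbar ≤ 1) (hε : S.ε ≤ 1)
    (hΔ : 0 < Δ) :
    S.ε * ∫ t in Ioo 0 T, ∫ r in Ioo S.a S.b, S.lowGradient c Δ (t, r)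
      ≤ geometricConst N γ T E₀ K * (Δ / S.a)
        + shearConst N T E₀ K * (Δ ^ ((3 : ℝ) / 2) / √S.ε) := by
  have hsub := S.rect_two_subset hb
  have hpoint : ∀ x ∈ rect T S.a 2, S.lowGradient c Δ x ≤ S.lowDissipation c Δ x := by
    intro x hx
    have hρ := S.dens_pos (hsub hx)
    refine (S.lowGradient_le c (mul_nonneg (lowPotentialDeriv₂_nonneg hΔ hρ)
      (sq_nonneg (S.densR x))) (S.radius_pos (hsub hx)).le fun hlt => ?_).trans_eq
      (mul_comm _ _)
    exact le_mul_of_one_le_left (sq_nonneg _) (one_le_lowPotentialDeriv₂ hΔ hρ hlt.le)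
  exact (mul_le_mul_of_nonneg_left (S.integral_lowGradient_le c hb
    ((S.continuousOn_lowDissipation c hΔ).mono hsub) hpoint) S.hε.le).trans
    (S.integral_lowDissipation_le c hb hρ hε hΔ)

lemma integral_lowGradient_le_boundConst (hb : 2 ≤ S.b) (hρ : S.ρbar ≤ 1) (hΔ : Δ ∈ Ioc 0 1) :
    S.ε * ∫ t in Ioo 0 T, ∫ r in Ioo S.a S.b, S.lowGradient c Δ (t, r)
      ≤ boundConst N γ T E₀ K * (min 1 √S.ε + Δ / S.a + Δ ^ ((3 : ℝ) / 2) / √S.ε) := by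
  have hgeometric : 0 ≤ Δ / S.a := div_nonneg hΔ.1.le S.ha0.le
  have hshear : 0 ≤ Δ ^ ((3 : ℝ) / 2) / √S.ε :=
    div_nonneg (rpow_nonneg hΔ.1.le _) (sqrt_nonneg _)
  have hM := (boundConst_pos N γ T E₀ K).le
  have hlarge := abs_nonneg (4 * K * largeConst N γ T E₀)
  have hgeometricConst := abs_nonneg (geometricConst N γ T E₀ K)
  have hshearConst := abs_nonneg (shearConst N T E₀ K)
  rcases le_total 1 S.ε with hε | hε
  · rw [min_eq_left (one_le_sqrt.2 hε)]
    calc _ ≤ 4 * K * largeConst N γ T E₀ := S.integral_lowGradient_le_of_one_le c hb hε hΔ.2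
      _ ≤ boundConst N γ T E₀ K := by
        unfold boundConst
        linarith [le_abs_self (4 * K * largeConst N γ T E₀)]
      _ ≤ _ := le_mul_of_one_le_right hM (by linarith)
  · calc _ ≤ _ := S.integral_lowGradient_le_of_le_one c hb hρ hε hΔ.1
      _ ≤ boundConst N γ T E₀ K * (Δ / S.a)
          + boundConst N γ T E₀ K * (Δ ^ ((3 : ℝ) / 2) / √S.ε) := by
        refine add_le_add (mul_le_mul_of_nonneg_right ?_ hgeometric)
          (mul_le_mul_of_nonneg_right ?_ hshear) <;> unfold boundConst
        · linarith [le_abs_self (geometricConst N γ T E₀ K)]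
        · linarith [le_abs_self (shearConst N T E₀ K)]
      _ = boundConst N γ T E₀ K * (Δ / S.a + Δ ^ ((3 : ℝ) / 2) / √S.ε) := by rw [mul_add]
      _ ≤ _ := mul_le_mul_of_nonneg_left
        (by linarith [le_min zero_le_one (sqrt_nonneg S.ε)]) hM

end ViscousSetup

theorem viscous_density_derivative_bound_general (n : ℕ) (γ T E₀ : ℝ)
    (ω : ℝ → ℝ) (hω_smooth : ContDiff ℝ 2 ω)
    (hω_one : ∀ r ∈ Icc (0 : ℝ) 1, ω r = 1) (hω_zero : ∀ r : ℝ, 2 ≤ r → ω r = 0) :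
    ∃ M : ℝ, 0 < M ∧ ∀ Δ ∈ Ioc (0 : ℝ) 1, ∀ S : ViscousSetup n γ T E₀,
      2 ≤ S.b → S.ρbar ≤ 1 →
      S.ε * ∫ t in Ioo 0 T, ∫ r in Ioo S.a S.b,
          (if S.ρ t r < Δ then (deriv (fun y => S.ρ t y) r) ^ 2 else 0)
            * (ω r) ^ 2 * r ^ (n - 1)
        ≤ M * (min 1 √S.ε + Δ / S.a + Δ ^ ((3 : ℝ) / 2) / √S.ε) := by
  rcases lt_or_ge n 2 with hn | hn
  · exact ⟨1, one_pos, fun _ _ S => absurd S.hn hn.not_ge⟩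
  obtain ⟨N, rfl⟩ := Nat.exists_eq_add_of_le' hn
  obtain ⟨K, c, hc⟩ := exists_cutoff_eq_sq hω_smooth hω_one hω_zero
  refine ⟨boundConst N γ T E₀ K, boundConst_pos N γ T E₀ K, fun Δ hΔ S hb hρ => ?_⟩
  simp only [← hc]
  exact S.integral_lowGradient_le_boundConst c hb hρ hΔ

/-- under the Viscous Setup with `b > 2` and `ρ̄ ≤ 1`, for a cutoff
`ω ∈ C_c^∞(ℝ)` with `ω = 1` on `[0,1]` and `ω = 0` on `[2,∞)`, there is `M > 0`
depending only on `n, γ, T, E₀, ω` (independent of `Δ` and `ε`) such that for any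
`Δ ∈ (0,½)`,
`ε∫₀^T∫_a^b ρ_r² 𝟙_{ρ<Δ} ω² r^{n−1} dr dt ≤ M(√ε(1 + Δ^{4−γ}) + Δ/a + Δ^{3/2}/√ε)`. -/
theorem viscous_density_derivative_bound (n : ℕ) (γ T E₀ : ℝ)
    (ω : ℝ → ℝ) (hω_smooth : ContDiff ℝ (⊤ : ℕ∞) ω) (hω_supp : HasCompactSupport ω)
    (hω_one : ∀ r ∈ Set.Icc (0:ℝ) 1, ω r = 1) (hω_zero : ∀ r : ℝ, 2 ≤ r → ω r = 0) :
    ∃ M : ℝ, 0 < M ∧ ∀ Δ ∈ Set.Ioo (0:ℝ) (1/2), ∀ S : ViscousSetup n γ T E₀,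
      2 < S.b → S.ρbar ≤ 1 →
      S.ε * ∫ t in Set.Ioo 0 T, ∫ r in Set.Ioo S.a S.b,
          (if S.ρ t r < Δ then (deriv (fun y => S.ρ t y) r) ^ (2:ℕ) else 0)
            * (ω r) ^ (2:ℕ) * r ^ (n - 1)
        ≤ M * (Real.sqrt S.ε * (1 + Δ ^ (4 - γ)) + Δ / S.a
            + Δ ^ ((3:ℝ)/2) / Real.sqrt S.ε) := by
  obtain ⟨M, hM, hbound⟩ := viscous_density_derivative_bound_general n γ T E₀ ω
    (contDiff_infty.1 hω_smooth 2) hω_one hω_zero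
  refine ⟨M, hM, fun Δ hΔ S hb hρ =>
    (hbound Δ ⟨hΔ.1, by linarith [hΔ.2]⟩ S hb.le hρ).trans ?_⟩
  have hsqrt : min 1 √S.ε ≤ √S.ε * (1 + Δ ^ (4 - γ)) := (min_le_right _ _).trans
    (le_mul_of_one_le_right (sqrt_nonneg _) (le_add_of_nonneg_right (rpow_nonneg hΔ.1.le _)))
  gcongr
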